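/- Let 1 ≤ n < α, p = 2n/(n+α), q = 2n/(n−α), and let N*(n, α) = π^{(n−α)/2} · Γ(α/2)/Γ((n+α)/2) · (Γ(n/2)/Γ(n))^{−α/n}. A nonnegative F ∈ L^p(𝕊ⁿ) with F not identically zero satisfies ‖Ĩ_α F‖_{L^q(𝕊ⁿ)} = N*(n, α)·‖F‖_{L^p(𝕊ⁿ)} if and only if there exist a > 0 and η ∈ ℝ^{n+1} with |η| < 1 such that F(ξ) = a(1 − ξ·η)^{−(n+α)/2} for all ξ ∈ 𝕊ⁿ. -/

import Mathlib

open MeasureTheory ENNReal Metric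
open scoped RealInnerProductSpace

/-- The standard surface measure on the unit sphere `𝕊ⁿ ⊆ ℝ^(n+1)`. -/
noncomputable def sphereMeasure (n : ℕ) :
    Measure (sphere (0 : EuclideanSpace ℝ (Fin (n + 1))) 1) :=
  (volume : Measure (EuclideanSpace ℝ (Fin (n + 1)))).toSphere

/-- The singular integral operator `Ĩ_α F(ξ) = ∫_{𝕊ⁿ} F(η) |ξ-η|^(α-n) dη` on the sphere,
where `|ξ-η|` is the chordal distance in `ℝ^(n+1)`, valued in `ℝ≥0∞`. -/
noncomputable def sphereRiesz (n : ℕ) (α : ℝ)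
    (F : sphere (0 : EuclideanSpace ℝ (Fin (n + 1))) 1 → ℝ)
    (ξ : sphere (0 : EuclideanSpace ℝ (Fin (n + 1))) 1) : ℝ≥0∞ :=
  ∫⁻ η, ENNReal.ofReal (F η *
    dist (ξ : EuclideanSpace ℝ (Fin (n + 1))) (η : EuclideanSpace ℝ (Fin (n + 1))) ^ (α - n))
    ∂(sphereMeasure n)

section p1
open scoped Pointwise

/-- Ambient space `ℝ^(n+1)`. -/
abbrev EE (n : ℕ) := EuclideanSpace ℝ (Fin (n + 1))
/-- The unit sphere. -/
abbrev SS (n : ℕ) := sphere (0 : EE n) 1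

instance sphereMeasure_fin (n : ℕ) : IsFiniteMeasure (sphereMeasure n) := by
  unfold sphereMeasure; infer_instance

instance sphereMeasure_open (n : ℕ) : (sphereMeasure n).IsOpenPosMeasure := by
  unfold sphereMeasure; infer_instance

lemma SS.norm_eq {n : ℕ} (ω : SS n) : ‖(ω : EE n)‖ = 1 := by
  simp

lemma sphereMeasure_singleton {n : ℕ} (hn : 1 ≤ n) (ξ : SS n) :
    sphereMeasure n {ξ} = 0 := by
  unfold sphereMeasure
  rw [Measure.toSphere_apply' _ (measurableSet_singleton _)]
  have : volume (Set.Ioo (0:ℝ) 1 • ((↑) '' ({ξ} : Set (SS n)) : Set (EE n))) = 0 := by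
    refine measure_mono_null ?_ (Measure.addHaar_submodule volume (Submodule.span ℝ {(ξ : EE n)}) ?_)
    · intro x hx
      obtain ⟨r, hr, y, hy, rfl⟩ := hx
      simp at hy
      subst hy
      exact Submodule.smul_mem _ _ (Submodule.mem_span_singleton_self _)
    · intro h
      have h1 := finrank_span_singleton (K := ℝ) (v := (ξ : EE n)) (by
        intro h0; have := SS.norm_eq ξ; rw [h0] at this; simp at this)
      rw [h] at h1
      simp at h1
      omega
  rw [this]; simp

lemma polar_lintegral {n : ℕ} (f : EE n → ℝ≥0∞) (hf : Measurable f) :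
    ∫⁻ x, f x = ∫⁻ ω : SS n, ∫⁻ r : Set.Ioi (0:ℝ), f (r.1 • ω.1) ∂(Measure.volumeIoiPow n)
      ∂(sphereMeasure n) := by
  have h := (volume : Measure (EE n)).measurePreserving_homeomorphUnitSphereProd
  have hd : Module.finrank ℝ (EE n) - 1 = n := by simp
  rw [hd] at h
  have h2 := h.lintegral_comp_emb (Homeomorph.measurableEmbedding _)
    (fun p : SS n × Set.Ioi (0:ℝ) => f (p.2.1 • p.1.1))
  rw [lintegral_prod] at h2
  · unfold sphereMeasure
    rw [← h2]
    have h3 := lintegral_subtype_comap (μ := (volume : Measure (EE n)))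
      (measurableSet_singleton (0 : EE n)).compl f
    rw [restrict_compl_singleton] at h3
    rw [← h3]
    refine lintegral_congr fun x => ?_
    congr 1
    have hx : ‖(x : EE n)‖ ≠ 0 := norm_ne_zero_iff.2 x.2
    simp [smul_smul, hx]
  · refine (hf.comp ?_).aemeasurable
    fun_prop

lemma transfer {n : ℕ} (T : EE n → EE n) (τ : SS n → SS n) (hTm : Measurable T)

    (hhom : ∀ r : ℝ, 0 < r → ∀ x, T (r • x) = r • T x)
    (hpos : ∀ ω : SS n, 0 < ‖T ω.1‖)
    (hτ : ∀ ω : SS n, T ω.1 = ‖T ω.1‖ • (τ ω).1)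
    (hcv : ∀ f : EE n → ℝ≥0∞, Measurable f →
      ∫⁻ x, f (T x) * ENNReal.ofReal (‖T x‖ / ‖x‖) = ∫⁻ x, f x)
    (g : SS n → ℝ≥0∞) (hg : Measurable g) :
    ∫⁻ ω, g (τ ω) * ENNReal.ofReal ((‖T ω.1‖ ^ n)⁻¹) ∂(sphereMeasure n) =
      ∫⁻ ω, g ω ∂(sphereMeasure n) := by
  classical
  let e0 : SS n := ⟨EuclideanSpace.single 0 1, by simp⟩
  let P : EE n → SS n := fun x => if h : x = 0 then e0 else ⟨‖x‖⁻¹ • x, by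
    simp [norm_smul, h]⟩
  have hPm : Measurable P := by
    have h1 : Measurable (fun x : EE n => (P x).1) := by
      have : (fun x : EE n => (P x).1) = fun x => if x = 0 then e0.1 else ‖x‖⁻¹ • x := by
        funext x
        by_cases h : x = 0 <;> simp [P, h]
      rw [this]
      refine Measurable.ite (measurableSet_singleton 0) measurable_const ?_
      exact (measurable_norm.inv).smul measurable_id
    exact h1.subtype_mk
  have hP : ∀ (r : ℝ), 0 < r → ∀ ω : SS n, P (r • ω.1) = ω := by
    intro r hr ω
    have hω : ω.1 ≠ 0 := by
      intro h0; have := SS.norm_eq ω; rw [h0] at this; simp at this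
    have : r • ω.1 ≠ 0 := by simp [hr.ne', hω]
    simp only [P, this, dite_false]
    ext1
    simp [norm_smul, abs_of_pos hr, SS.norm_eq ω, smul_smul, hr.ne']
  let f : EE n → ℝ≥0∞ := fun x => g (P x) * (Metric.ball (0 : EE n) 1).indicator 1 x
  have hf : Measurable f := (hg.comp hPm).mul (measurable_one.indicator measurableSet_ball)
  have h1 := hcv f hf
  rw [polar_lintegral _ hf, polar_lintegral] at h1
  swap
  · exact (hf.comp hTm).mul ((hTm.norm.div measurable_norm).ennreal_ofReal)
  have hn1 : (0:ℝ) < (n:ℝ) + 1 := by positivity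
  have hcalc : ∀ c : ℝ, 0 < c → ∫⁻ r : Set.Ioi (0:ℝ), (Set.Iio (c:ℝ)).indicator 1 r.1
      ∂(Measure.volumeIoiPow n) = ENNReal.ofReal (c ^ (n+1) / (n+1)) := by
    intro c hc
    have := Measure.volumeIoiPow_apply_Iio n ⟨c, hc⟩
    simp only at this
    rw [← this, ← lintegral_indicator_one measurableSet_Iio]
    refine lintegral_congr fun r => ?_
    rfl
  have hL : ∀ ω : SS n, ∫⁻ r : Set.Ioi (0:ℝ), f (T (r.1 • ω.1)) *
      ENNReal.ofReal (‖T (r.1 • ω.1)‖ / ‖r.1 • ω.1‖) ∂(Measure.volumeIoiPow n)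
      = (g (τ ω) * ENNReal.ofReal ((‖T ω.1‖ ^ n)⁻¹)) * ENNReal.ofReal (1 / (n+1)) := by
    intro ω
    have hk := hpos ω
    set k := ‖T ω.1‖ with hkdef
    have : ∀ r : Set.Ioi (0:ℝ), f (T (r.1 • ω.1)) *
        ENNReal.ofReal (‖T (r.1 • ω.1)‖ / ‖r.1 • ω.1‖) =
        (g (τ ω) * ENNReal.ofReal k) * (Set.Iio (k⁻¹)).indicator 1 r.1 := by
      intro r
      have hr : 0 < r.1 := r.2
      have e1 : T (r.1 • ω.1) = (r.1 * k) • (τ ω).1 := by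
        rw [hhom _ hr, hτ ω, smul_smul]
      have e2 : ‖T (r.1 • ω.1)‖ = r.1 * k := by
        rw [e1, norm_smul, SS.norm_eq, Real.norm_of_nonneg (by positivity), mul_one]
      have e3 : ‖r.1 • ω.1‖ = r.1 := by
        rw [norm_smul, SS.norm_eq, Real.norm_of_nonneg hr.le, mul_one]
      rw [e2, e3, mul_div_cancel_left₀ _ hr.ne']
      simp only [f]
      rw [e1, hP _ (by positivity), ← e1]
      have : (ball (0 : EE n) 1).indicator (1 : EE n → ℝ≥0∞) (T (r.1 • ω.1)) =
          (Set.Iio (k⁻¹)).indicator 1 r.1 := by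
        simp only [Set.indicator, mem_ball_zero_iff, e2, Set.mem_Iio, Pi.one_apply]
        congr 1
        rw [eq_iff_iff, lt_inv_comm₀ hr hk, ← one_div, lt_div_iff₀ hr, mul_comm]
      rw [this]; ring
    simp_rw [this]
    rw [lintegral_const_mul _ (by
      exact (measurable_one.indicator measurableSet_Iio).comp measurable_subtype_coe),
      hcalc _ (inv_pos.2 hk)]
    rw [mul_assoc, mul_assoc, ← ENNReal.ofReal_mul hk.le, ← ENNReal.ofReal_mul (by positivity)]
    congr 2
    rw [inv_pow, pow_succ]
    field_simp
  have hR : ∀ ω : SS n, ∫⁻ r : Set.Ioi (0:ℝ), f (r.1 • ω.1) ∂(Measure.volumeIoiPow n)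
      = g ω * ENNReal.ofReal (1 / (n+1)) := by
    intro ω
    have : ∀ r : Set.Ioi (0:ℝ), f (r.1 • ω.1) = g ω * (Set.Iio (1:ℝ)).indicator 1 r.1 := by
      intro r
      have hr : 0 < r.1 := r.2
      have e3 : ‖r.1 • ω.1‖ = r.1 := by
        rw [norm_smul, SS.norm_eq, Real.norm_of_nonneg hr.le, mul_one]
      simp only [f]
      rw [hP _ hr]
      simp only [Set.indicator, mem_ball_zero_iff, e3, Set.mem_Iio, Pi.one_apply]
    simp_rw [this]
    rw [lintegral_const_mul _ (by
      exact (measurable_one.indicator measurableSet_Iio).comp measurable_subtype_coe),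
      hcalc _ one_pos]
    simp
  simp_rw [hL, hR] at h1
  have hc0 : ENNReal.ofReal (1 / ((n:ℝ)+1)) ≠ 0 := by
    simp; positivity
  rw [lintegral_mul_const' _ _ ENNReal.ofReal_ne_top, lintegral_mul_const' _ _ ENNReal.ofReal_ne_top]
    at h1
  exact (ENNReal.mul_left_inj hc0 ENNReal.ofReal_ne_top).1 h1

end p1


section boost
variable {n : ℕ}

/-- Lorentz factor. -/
noncomputable def gam (v : EE n) : ℝ := √(1 + ‖v‖ ^ 2)
/-- Time part of the Lorentz boost. -/
noncomputable def bt (v : EE n) (t : ℝ) (x : EE n) : ℝ := gam v * t - ⟪x, v⟫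
/-- Space part of the Lorentz boost. -/
noncomputable def bx (v : EE n) (t : ℝ) (x : EE n) : EE n := x + (⟪x, v⟫ / (gam v + 1) - t) • v
/-- Boost on the light cone. -/
noncomputable def boost (v : EE n) (x : EE n) : EE n := bx v ‖x‖ x

lemma gam_sq (v : EE n) : gam v ^ 2 = 1 + ‖v‖ ^ 2 := Real.sq_sqrt (by positivity)
lemma gam_pos (v : EE n) : 0 < gam v := Real.sqrt_pos.2 (by positivity)
lemma gam_one_le (v : EE n) : 1 ≤ gam v := by
  have := gam_sq v; have := gam_pos v; nlinarith [sq_nonneg ‖v‖]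
lemma gam_neg (v : EE n) : gam (-v) = gam v := by simp [gam]
lemma norm_lt_gam (v : EE n) : ‖v‖ < gam v := by
  have := gam_sq v; have := gam_pos v; have := norm_nonneg v
  by_contra h
  push Not at h
  nlinarith

lemma lor (v : EE n) (t s : ℝ) (x y : EE n) :
    bt v t x * bt v s y - ⟪bx v t x, bx v s y⟫ = t * s - ⟪x, y⟫ := by
  have h1 : (0:ℝ) < gam v + 1 := by linarith [gam_pos v]
  have hv : ⟪v, v⟫ = gam v ^ 2 - 1 := by rw [real_inner_self_eq_norm_sq, gam_sq]; ring
  simp only [bt, bx, inner_add_left, inner_add_right, real_inner_smul_left, real_inner_smul_right, hv]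
  rw [real_inner_comm y v]
  set X := ⟪x, v⟫
  set Y := ⟪y, v⟫
  field_simp
  ring

lemma bt_inv (v : EE n) (t : ℝ) (x : EE n) : bt (-v) (bt v t x) (bx v t x) = t := by
  have h1 : (0:ℝ) < gam v + 1 := by linarith [gam_pos v]
  have hv : ⟪v, v⟫ = gam v ^ 2 - 1 := by rw [real_inner_self_eq_norm_sq, gam_sq]; ring
  simp only [bt, bx, inner_add_left, inner_neg_right, real_inner_smul_left, hv, gam_neg]
  field_simp
  ring

lemma bx_inv (v : EE n) (t : ℝ) (x : EE n) : bx (-v) (bt v t x) (bx v t x) = x := by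
  have h1 : (0:ℝ) < gam v + 1 := by linarith [gam_pos v]
  have hv : ⟪v, v⟫ = gam v ^ 2 - 1 := by rw [real_inner_self_eq_norm_sq, gam_sq]; ring
  simp only [bt, bx, inner_add_left, inner_neg_right, real_inner_smul_left, hv, gam_neg]
  rw [smul_neg, add_assoc, ← sub_eq_add_neg, ← sub_smul]
  have : (⟪x, v⟫ / (gam v + 1) - t - (-(⟪x, v⟫ + (⟪x, v⟫ / (gam v + 1) - t) * (gam v ^ 2 - 1)) / (gam v + 1) -
    (gam v * t - ⟪x, v⟫))) = 0 := by
    field_simp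
    ring
  rw [this]; simp

lemma bt_nonneg (v : EE n) (x : EE n) : (gam v - ‖v‖) * ‖x‖ ≤ bt v ‖x‖ x := by
  have := real_inner_le_norm x v
  unfold bt; nlinarith

lemma bt_pos (v : EE n) (t : ℝ) (x : EE n) (h : ‖x‖ ≤ t) (ht : 0 < t) : 0 < bt v t x := by
  have := real_inner_le_norm x v
  have h2 := norm_lt_gam v
  unfold bt; nlinarith [norm_nonneg v]

lemma norm_boost (v : EE n) (x : EE n) : ‖boost v x‖ = bt v ‖x‖ x := by
  have h := lor v ‖x‖ ‖x‖ x x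
  rw [real_inner_self_eq_norm_sq, real_inner_self_eq_norm_sq] at h
  have h2 := bt_nonneg v x
  have h3 : 0 ≤ bt v ‖x‖ x := le_trans (mul_nonneg (by linarith [norm_lt_gam v]) (norm_nonneg x)) h2
  unfold boost
  have : ‖bx v ‖x‖ x‖ ^ 2 = bt v ‖x‖ x ^ 2 := by linarith
  exact (sq_eq_sq₀ (norm_nonneg _) h3).1 this

lemma boost_inv (v : EE n) (x : EE n) : boost (-v) (boost v x) = x := by
  conv_lhs => unfold boost
  change bx (-v) ‖boost v x‖ (bx v ‖x‖ x) = x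
  rw [norm_boost, bx_inv]

lemma boost_inv' (v : EE n) (x : EE n) : boost v (boost (-v) x) = x := by
  have := boost_inv (-v) x
  rwa [neg_neg] at this

lemma boost_homog (v : EE n) (r : ℝ) (hr : 0 < r) (x : EE n) : boost v (r • x) = r • boost v x := by
  unfold boost bx
  rw [norm_smul, Real.norm_of_nonneg hr.le, real_inner_smul_left, smul_add, smul_smul]
  congr 2; ring

lemma boost_cont (v : EE n) : Continuous (boost v) := by
  unfold boost bx
  fun_prop

lemma boost_deriv (v : EE n) (x : EE n) (hx : x ≠ 0) :
    ∃ D : EE n →L[ℝ] EE n, HasFDerivAt (boost v) D x ∧ D.det = ‖boost v x‖ / ‖x‖ := by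
  have hx' : 0 < ‖x‖ := norm_pos_iff.2 hx
  have h1 : (0:ℝ) < gam v + 1 := by linarith [gam_pos v]
  have hnorm : HasFDerivAt (fun y : EE n => ‖y‖) (‖x‖⁻¹ • innerSL ℝ x) x := by
    have := (hasStrictFDerivAt_norm_sq x).hasFDerivAt.sqrt (by positivity)
    simp only [Real.sqrt_sq (norm_nonneg _)] at this
    convert! this using 1
    ext y
    simp
    field_simp
  have hin : HasFDerivAt (fun y : EE n => ⟪y, v⟫) (innerSL ℝ v) x := by
    have := (innerSL ℝ v).hasFDerivAt (x := x)
    convert! this using 2 with y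
    simp [real_inner_comm]
  let Lf : EE n →L[ℝ] ℝ := (gam v + 1)⁻¹ • innerSL ℝ v - ‖x‖⁻¹ • innerSL ℝ x
  refine ⟨ContinuousLinearMap.id ℝ _ + Lf.smulRight v, ?_, ?_⟩
  · unfold boost bx
    have h3 : HasFDerivAt (fun y : EE n => ⟪y, v⟫ / (gam v + 1) - ‖y‖) Lf x := by
      have := (hin.const_mul (gam v + 1)⁻¹).sub hnorm
      convert! this using 2 with y
      simp; ring
    exact (hasFDerivAt_id x).add (h3.smul_const v)
  · have h4 : ((ContinuousLinearMap.id ℝ _ + Lf.smulRight v : EE n →L[ℝ] EE n) : EE n →ₗ[ℝ] EE n)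
        = LinearMap.transvection (Lf : EE n →ₗ[ℝ] ℝ) v := by
      ext1 y
      simp [LinearMap.transvection]
    rw [ContinuousLinearMap.det, h4, LinearMap.transvection.det, norm_boost]
    have hv : ⟪v, v⟫ = gam v ^ 2 - 1 := by rw [real_inner_self_eq_norm_sq, gam_sq]; ring
    simp only [Lf, bt, ContinuousLinearMap.coe_coe, sub_apply, smul_apply, innerSL_apply_apply, hv, smul_eq_mul]
    field_simp
    ring

lemma boost_cv (v : EE n) (f : EE n → ℝ≥0∞) (hf : Measurable f) :
    ∫⁻ x, f (boost v x) * ENNReal.ofReal (‖boost v x‖ / ‖x‖) = ∫⁻ x, f x := by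
  have hs : MeasurableSet ({0}ᶜ : Set (EE n)) := (measurableSet_singleton _).compl
  choose! D hD hdet using fun x (hx : x ∈ ({0}ᶜ : Set (EE n))) => boost_deriv v x hx
  have hinj : Set.InjOn (boost v) ({0}ᶜ : Set (EE n)) := fun a _ b _ h => by
    rw [← boost_inv v a, h, boost_inv]
  have him : boost v '' ({0}ᶜ : Set (EE n)) = {0}ᶜ := by
    have h0 : ∀ w : EE n, boost w 0 = 0 := by intro w; simp [boost, bx]
    ext x
    constructor
    · rintro ⟨y, hy, rfl⟩ h
      apply hy
      rw [Set.mem_singleton_iff] at h ⊢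
      rw [← boost_inv v y, h, h0]
    · intro hx
      refine ⟨boost (-v) x, ?_, boost_inv' v x⟩
      intro h
      apply hx
      rw [Set.mem_singleton_iff] at h ⊢
      rw [← boost_inv' v x, h, h0]
  have := lintegral_image_eq_lintegral_abs_det_fderiv_mul volume hs
    (fun x hx => (hD x hx).hasFDerivWithinAt) hinj f
  rw [him, restrict_compl_singleton] at this
  rw [this]
  conv_rhs => rw [← restrict_compl_singleton (μ := (volume : Measure (EE n))) 0]
  conv_lhs => rw [← restrict_compl_singleton (μ := (volume : Measure (EE n))) 0]
  refine setLIntegral_congr_fun hs fun x hx => ?_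
  rw [hdet x hx, abs_of_nonneg (by positivity), mul_comm]

/-- conformal factor -/
noncomputable def kf (v : EE n) (ω : SS n) : ℝ := bt v 1 ω.1

lemma kf_eq (v : EE n) (ω : SS n) : kf v ω = gam v - ⟪ω.1, v⟫ := by simp [kf, bt]

lemma norm_boost_S (v : EE n) (ω : SS n) : ‖boost v ω.1‖ = kf v ω := by
  rw [norm_boost, kf, SS.norm_eq]

lemma kf_pos (v : EE n) (ω : SS n) : 0 < kf v ω :=
  bt_pos v 1 ω.1 (SS.norm_eq ω).le one_pos

lemma kf_cont (v : EE n) : Continuous (kf v) := by unfold kf bt; fun_prop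

/-- Möbius map of the sphere -/
noncomputable def mob (v : EE n) (ω : SS n) : SS n :=
  ⟨(kf v ω)⁻¹ • boost v ω.1, by
    have := kf_pos v ω
    simp [norm_smul, norm_boost_S, abs_of_pos this, this.ne']⟩

lemma boost_eq (v : EE n) (ω : SS n) : boost v ω.1 = kf v ω • (mob v ω).1 := by
  have := kf_pos v ω
  simp [mob, smul_smul, this.ne']

lemma mob_cont (v : EE n) : Continuous (mob v) := by
  unfold mob
  refine Continuous.subtype_mk ?_ _
  exact ((kf_cont v).inv₀ fun ω => (kf_pos v ω).ne').smul ((boost_cont v).comp continuous_subtype_val)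

lemma mob_inv (v : EE n) (ω : SS n) : mob (-v) (mob v ω) = ω := by
  have h := boost_inv v ω.1
  rw [boost_eq, boost_homog _ _ (kf_pos v ω), boost_eq, smul_smul] at h
  have h2 := congrArg norm h
  have hp := mul_pos (kf_pos v ω) (kf_pos (-v) (mob v ω))
  rw [norm_smul, SS.norm_eq, SS.norm_eq, Real.norm_of_nonneg hp.le, mul_one] at h2
  rw [h2, one_smul] at h
  exact Subtype.ext h

lemma kf_mul_inv (v : EE n) (ω : SS n) : kf v ω * kf (-v) (mob v ω) = 1 := by
  have h := boost_inv v ω.1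
  rw [boost_eq, boost_homog _ _ (kf_pos v ω), boost_eq, smul_smul] at h
  have h2 := congrArg norm h
  have hp := mul_pos (kf_pos v ω) (kf_pos (-v) (mob v ω))
  rwa [norm_smul, SS.norm_eq, SS.norm_eq, Real.norm_of_nonneg hp.le, mul_one] at h2

lemma inner_mob (v : EE n) (ω ζ : SS n) :
    kf v ω * kf v ζ * (1 - ⟪(mob v ω).1, (mob v ζ).1⟫) = 1 - ⟪ω.1, ζ.1⟫ := by
  have h := lor v 1 1 ω.1 ζ.1
  have e : ∀ ω : SS n, bx v 1 ω.1 = kf v ω • (mob v ω).1 := by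
    intro ω; rw [← boost_eq, boost, SS.norm_eq]
  rw [e, e, real_inner_smul_left, real_inner_smul_right] at h
  unfold kf at *
  linarith

lemma dist_sq_S (ω ζ : SS n) : dist ω.1 ζ.1 ^ 2 = 2 * (1 - ⟪ω.1, ζ.1⟫) := by
  rw [dist_eq_norm, norm_sub_sq_real, SS.norm_eq, SS.norm_eq]; ring

lemma dist_mob (v : EE n) (ω ζ : SS n) :
    kf v ω * kf v ζ * dist (mob v ω).1 (mob v ζ).1 ^ 2 = dist ω.1 ζ.1 ^ 2 := by
  rw [dist_sq_S, dist_sq_S, ← inner_mob v ω ζ]; ring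

/-- Composition law: the parameter of the boosted point. -/
lemma kf_comp (v w : EE n) (ω : SS n) :
    kf w ω = kf v ω * kf (bx v (gam w) w) (mob v ω) := by
  have h := lor v (gam w) 1 w ω.1
  have e : ∀ ω : SS n, bx v 1 ω.1 = kf v ω • (mob v ω).1 := by
    intro ω; rw [← boost_eq, boost, SS.norm_eq]
  have hg : gam (bx v (gam w) w) = bt v (gam w) w := by
    have h2 := lor v (gam w) (gam w) w w
    rw [real_inner_self_eq_norm_sq, real_inner_self_eq_norm_sq] at h2
    have h3 := gam_sq (bx v (gam w) w)
    have h4 := gam_sq w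
    have h5 := bt_pos v (gam w) w (norm_lt_gam w).le (gam_pos w)
    refine (sq_eq_sq₀ (gam_pos _).le h5.le).1 ?_
    nlinarith
  rw [kf_eq w, kf_eq (bx v (gam w) w), hg]
  rw [e, real_inner_smul_right] at h
  rw [real_inner_comm, real_inner_comm (bx v (gam w) w) (mob v ω).1]
  have : bt v 1 ω.1 = kf v ω := rfl
  rw [this] at h
  linarith

lemma mob_lintegral (v : EE n) (g : SS n → ℝ≥0∞) (hg : Measurable g) :
    ∫⁻ ω, g (mob v ω) * ENNReal.ofReal ((kf v ω ^ n)⁻¹) ∂(sphereMeasure n) =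
      ∫⁻ ω, g ω ∂(sphereMeasure n) := by
  have := transfer (boost v) (mob v) (boost_cont v).measurable (boost_homog v)
    (fun ω => by rw [norm_boost_S]; exact kf_pos v ω)
    (fun ω => by rw [norm_boost_S]; exact boost_eq v ω) (boost_cv v) g hg
  simpa only [norm_boost_S] using this

end boost


section transforms
variable {n : ℕ}

/-- Action of a linear isometry on the sphere. -/
noncomputable def isoS (R : EE n ≃ₗᵢ[ℝ] EE n) (ω : SS n) : SS n :=
  ⟨R ω.1, by simp⟩

lemma isoS_cont (R : EE n ≃ₗᵢ[ℝ] EE n) : Continuous (isoS R) := by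
  unfold isoS
  exact Continuous.subtype_mk (R.continuous.comp continuous_subtype_val) _

lemma isoS_lintegral (R : EE n ≃ₗᵢ[ℝ] EE n) (g : SS n → ℝ≥0∞) (hg : Measurable g) :
    ∫⁻ ω, g (isoS R ω) ∂(sphereMeasure n) = ∫⁻ ω, g ω ∂(sphereMeasure n) := by
  have := transfer R (isoS R) R.continuous.measurable
    (fun r _ x => by simp) (fun ω => by simp) (fun ω => by simp [isoS]) (fun f hf => by
      rw [← R.measurePreserving.lintegral_comp hf]
      conv_rhs => rw [← restrict_compl_singleton (μ := (volume : Measure (EE n))) 0]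
      conv_lhs => rw [← restrict_compl_singleton (μ := (volume : Measure (EE n))) 0]
      refine setLIntegral_congr_fun (measurableSet_singleton _).compl fun x hx => ?_
      have : ‖x‖ ≠ 0 := norm_ne_zero_iff.2 hx
      simp [this]) g hg
  simpa using this

lemma isoS_mp (R : EE n ≃ₗᵢ[ℝ] EE n) :
    MeasurePreserving (isoS R) (sphereMeasure n) (sphereMeasure n) := by
  refine ⟨(isoS_cont R).measurable, ?_⟩
  ext s hs
  rw [Measure.map_apply (isoS_cont R).measurable hs]
  have := isoS_lintegral R (s.indicator 1) (measurable_one.indicator hs)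
  rw [lintegral_indicator_one hs] at this
  rw [← this, ← lintegral_indicator_one ((isoS_cont R).measurable hs)]
  rfl

/-- The Möbius map as homeomorphism. -/
noncomputable def mobH (v : EE n) : SS n ≃ₜ SS n where
  toFun := mob v
  invFun := mob (-v)
  left_inv := mob_inv v
  right_inv ω := by have := mob_inv (-v) ω; rwa [neg_neg] at this
  continuous_toFun := mob_cont v
  continuous_invFun := mob_cont (-v)

lemma mob_emb (v : EE n) : MeasurableEmbedding (mob v) := (mobH v).measurableEmbedding

/-- The weighted measure. -/
noncomputable def wmeas (v : EE n) : Measure (SS n) :=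
  (sphereMeasure n).withDensity fun ω => ((Real.toNNReal ((kf v ω ^ n)⁻¹) : NNReal) : ℝ≥0∞)

lemma wd_meas (v : EE n) : Measurable fun ω => Real.toNNReal ((kf v ω ^ n)⁻¹) :=
  (((kf_cont v).measurable.pow_const n).inv).real_toNNReal

lemma mob_map (v : EE n) : (wmeas v).map (mob v) = sphereMeasure n := by
  ext s hs
  rw [Measure.map_apply (mob_cont v).measurable hs, wmeas,
    withDensity_apply _ ((mob_cont v).measurable hs)]
  have := mob_lintegral v (s.indicator 1) (measurable_one.indicator hs)
  rw [lintegral_indicator_one hs] at this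
  rw [← this, ← lintegral_indicator ((mob_cont v).measurable hs)]
  refine lintegral_congr fun ω => ?_
  by_cases h : mob v ω ∈ s <;> simp [Set.indicator, h, ENNReal.ofReal]

lemma mob_integral (v : EE n) (f : SS n → ℝ) :
    ∫ ω, f (mob v ω) * (kf v ω ^ n)⁻¹ ∂(sphereMeasure n) = ∫ ω, f ω ∂(sphereMeasure n) := by
  conv_rhs => rw [← mob_map v, (mob_emb v).integral_map, wmeas,
    integral_withDensity_eq_integral_smul (wd_meas v)]
  refine integral_congr_ae (.of_forall fun ω => ?_)
  have := kf_pos v ω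
  simp only [NNReal.smul_def, smul_eq_mul]
  rw [Real.coe_toNNReal _ (by positivity), mul_comm]

lemma mob_integrable (v : EE n) (f : SS n → ℝ) :
    Integrable (fun ω => f (mob v ω) * (kf v ω ^ n)⁻¹) (sphereMeasure n) ↔
      Integrable f (sphereMeasure n) := by
  conv_rhs => rw [← mob_map v, (mob_emb v).integrable_map_iff, wmeas,
    integrable_withDensity_iff_integrable_smul (wd_meas v)]
  refine integrable_congr (.of_forall fun ω => ?_)
  have := kf_pos v ω
  simp only [NNReal.smul_def, smul_eq_mul, Function.comp]
  rw [Real.coe_toNNReal _ (by positivity), mul_comm]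

lemma mob_ae (v : EE n) (P : SS n → Prop) (h : ∀ᵐ ω ∂(sphereMeasure n), P (mob v ω)) :
    ∀ᵐ ω ∂(sphereMeasure n), P ω := by
  rw [← mob_map v, (mob_emb v).ae_map_iff]
  exact (withDensity_absolutelyContinuous _ _).ae_le h

variable (lam : ℝ)

/-- Potential of `F`. -/
noncomputable def pot (F : SS n → ℝ) (ξ : SS n) : ℝ :=
  ∫ η, F η * dist ξ.1 η.1 ^ lam ∂(sphereMeasure n)

/-- Conformal transform of `F`. -/
noncomputable def tr (v : EE n) (F : SS n → ℝ) (ω : SS n) : ℝ :=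
  F (mob v ω) * kf v ω ^ (-((n:ℝ) + lam / 2))

/-- The balancing functional. -/
noncomputable def phi (F : SS n → ℝ) (w : EE n) : ℝ :=
  ∫ ω, F ω * kf w ω ^ (lam / 2) ∂(sphereMeasure n)

lemma dist_mob_rpow (v : EE n) (ω ζ : SS n) :
    dist ω.1 ζ.1 ^ lam = kf v ω ^ (lam/2) * kf v ζ ^ (lam/2) * dist (mob v ω).1 (mob v ζ).1 ^ lam := by
  have h := dist_mob v ω ζ
  have h1 := kf_pos v ω
  have h2 := kf_pos v ζ
  have e : ∀ x : ℝ, 0 ≤ x → x ^ lam = (x ^ 2) ^ (lam / 2) := by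
    intro x hx
    rw [← Real.rpow_natCast, ← Real.rpow_mul hx]; congr 1; push_cast; ring
  rw [e _ dist_nonneg, e (dist (mob v ω).1 _) dist_nonneg, ← h, Real.mul_rpow (by positivity) (by positivity),
    Real.mul_rpow h1.le h2.le]

lemma tr_pot (v : EE n) (F : SS n → ℝ) (ω : SS n) :
    pot lam (tr lam v F) ω = kf v ω ^ (lam / 2) * pot lam F (mob v ω) := by
  unfold pot
  conv_rhs => rw [← mob_integral v, ← integral_const_mul]
  refine integral_congr_ae (.of_forall fun ζ => ?_)
  have h2 := kf_pos v ζ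
  simp only [tr]
  rw [dist_mob_rpow lam v ω ζ]
  have : kf v ζ ^ (-((n:ℝ) + lam / 2)) * kf v ζ ^ (lam / 2) = (kf v ζ ^ n)⁻¹ := by
    rw [← Real.rpow_add h2, ← Real.rpow_natCast, ← Real.rpow_neg h2.le]; congr 1; ring
  rw [← this]; ring

lemma tr_phi (v w : EE n) (F : SS n → ℝ) :
    phi lam (tr lam v F) w = phi lam F (bx v (gam w) w) := by
  unfold phi
  conv_rhs => rw [← mob_integral v]
  refine integral_congr_ae (.of_forall fun ζ => ?_)
  have h2 := kf_pos v ζ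
  simp only [tr]
  rw [kf_comp v w ζ, Real.mul_rpow h2.le (kf_pos _ _).le]
  have : kf v ζ ^ (-((n:ℝ) + lam / 2)) * kf v ζ ^ (lam / 2) = (kf v ζ ^ n)⁻¹ := by
    rw [← Real.rpow_add h2, ← Real.rpow_natCast, ← Real.rpow_neg h2.le]; congr 1; ring
  rw [← this]; ring

lemma tr_pow (v : EE n) (F : SS n → ℝ) (hF : ∀ ω, 0 ≤ F ω) (p : ℝ) (hp : ((n:ℝ) + lam/2) * p = n) :
    ∫ ω, tr lam v F ω ^ p ∂(sphereMeasure n) = ∫ ω, F ω ^ p ∂(sphereMeasure n) := by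
  conv_rhs => rw [← mob_integral v]
  refine integral_congr_ae (.of_forall fun ζ => ?_)
  have h2 := kf_pos v ζ
  simp only [tr]
  rw [Real.mul_rpow (hF _) (by positivity), ← Real.rpow_mul h2.le]
  congr 1
  rw [← Real.rpow_natCast, ← Real.rpow_neg h2.le]; congr 1; linarith

lemma tr_pot_pow (v : EE n) (F : SS n → ℝ) (hF : ∀ ω, 0 ≤ pot lam F ω) (q : ℝ)
    (hq : lam / 2 * q = -n) :
    ∫ ω, pot lam (tr lam v F) ω ^ q ∂(sphereMeasure n) =
      ∫ ω, pot lam F ω ^ q ∂(sphereMeasure n) := by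
  conv_rhs => rw [← mob_integral v]
  refine integral_congr_ae (.of_forall fun ζ => ?_)
  have h2 := kf_pos v ζ
  simp only [tr_pot]
  rw [Real.mul_rpow (by positivity) (hF _), ← Real.rpow_mul h2.le, mul_comm]
  congr 1
  rw [← Real.rpow_natCast, ← Real.rpow_neg h2.le]; congr 1

lemma tr_integrable (v : EE n) (F : SS n → ℝ) (hF : Integrable F (sphereMeasure n)) :
    Integrable (tr lam v F) (sphereMeasure n) := by
  have h := (mob_integrable v F).2 hF
  have hc : Continuous fun ω => kf v ω ^ (-(lam/2)) :=
    (kf_cont v).rpow_const fun ω => Or.inl (kf_pos v ω).ne'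
  obtain ⟨C, hC⟩ := isCompact_univ.exists_bound_of_continuousOn hc.continuousOn
  have := h.bdd_mul (c := C) hc.aestronglyMeasurable (.of_forall fun ω => hC ω trivial)
  refine this.congr (.of_forall fun ω => ?_)
  have h2 := kf_pos v ω
  simp only [tr]
  rw [← Real.rpow_natCast, ← Real.rpow_neg h2.le, mul_comm, mul_assoc, ← Real.rpow_add h2]
  congr 2; ring

lemma tr_inv (v : EE n) (F : SS n → ℝ) (ω : SS n) : tr lam (-v) (tr lam v F) ω = F ω := by
  simp only [tr]
  have h := mob_inv (-v) ω
  have h2 := kf_mul_inv (-v) ω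
  rw [neg_neg] at h h2
  rw [h, mul_assoc, ← Real.mul_rpow (kf_pos _ _).le (kf_pos _ _).le, mul_comm (kf v _), h2]
  simp

end transforms


lemma rev_young {p q : ℝ} (hp0 : 0 < p) (hp1 : p < 1) (hpq : 1 / p + 1 / q = 1)
    {x y : ℝ} (hx : 0 ≤ x) (hy : 0 < y) :
    x ^ p / p + y ^ q / q ≤ x * y ∧ (x ^ p / p + y ^ q / q = x * y → x ^ p = y ^ q) := by
  have hq0 : q ≠ 0 := by
    rintro rfl
    have : 1 / p = 1 := by simpa using hpq
    rw [div_eq_one_iff_eq hp0.ne'] at this; linarith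
  have hyq : 0 < y ^ q := Real.rpow_pos_of_pos hy q
  set s := x ^ p / y ^ q with hs
  have hs0 : 0 ≤ s := by positivity
  have hr : 1 < 1 / p := by rw [lt_div_iff₀ hp0]; linarith
  have hxs : x ^ p = s * y ^ q := by rw [hs]; field_simp
  have hqp : q / p = q - 1 := by
    have : q * (1 / p + 1 / q) = q := by rw [hpq, mul_one]
    field_simp at this ⊢
    linarith
  have hsr : s ^ (1 / p) * y ^ q = x * y := by
    rw [hs, Real.div_rpow (by positivity) hyq.le, ← Real.rpow_mul hx, ← Real.rpow_mul hy.le]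
    rw [mul_one_div_cancel hp0.ne', Real.rpow_one, mul_one_div, hqp, Real.rpow_sub_one hy.ne']
    field_simp
  have h1q : 1 / q = 1 - 1 / p := by linarith
  have e : x ^ p / p + y ^ q / q = (1 + (1 / p) * (s - 1)) * y ^ q := by
    rw [hxs, div_eq_mul_one_div _ q, h1q]; ring
  rw [e, ← hsr]
  constructor
  · refine mul_le_mul_of_nonneg_right ?_ hyq.le
    have := one_add_mul_self_le_rpow_one_add (s := s - 1) (by linarith) hr.le
    simpa using this
  · intro h
    have h2 := mul_right_cancel₀ hyq.ne' h
    by_contra hne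
    have hs1 : s - 1 ≠ 0 := by
      intro h3
      apply hne
      rw [hxs]
      have : s = 1 := by linarith
      rw [this, one_mul]
    have := one_add_mul_self_lt_rpow_one_add (s := s - 1) (by linarith) hs1 hr
    simp at this
    simp at h2
    linarith

lemma rev_holder {X : Type*} [MeasurableSpace X] {μ : Measure X} {p q : ℝ} (hp0 : 0 < p)
    (hp1 : p < 1) (hpq : 1 / p + 1 / q = 1) (F h : X → ℝ) (hF : ∀ x, 0 ≤ F x) (hh : ∀ x, 0 < h x)
    (hFp : Integrable (fun x => F x ^ p) μ) (hhq : Integrable (fun x => h x ^ q) μ)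
    (hFh : Integrable (fun x => F x * h x) μ)
    (hA : 0 < ∫ x, F x ^ p ∂μ) (hV : 0 < ∫ x, h x ^ q ∂μ) :
    (∫ x, F x ^ p ∂μ) ^ (1/p) * (∫ x, h x ^ q ∂μ) ^ (1/q) ≤ ∫ x, F x * h x ∂μ ∧
    ((∫ x, F x ^ p ∂μ) ^ (1/p) * (∫ x, h x ^ q ∂μ) ^ (1/q) = ∫ x, F x * h x ∂μ →
      ∃ c : ℝ, 0 < c ∧ ∀ᵐ x ∂μ, F x = c * h x ^ (q - 1)) := by
  have hq0 : q ≠ 0 := by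
    rintro rfl
    have : 1 / p = 1 := by simpa using hpq
    rw [div_eq_one_iff_eq hp0.ne'] at this; linarith
  have hqp : q * (1 / p) = q - 1 := by
    have : q * (1 / p + 1 / q) = q := by rw [hpq, mul_one]
    field_simp at this ⊢
    linarith
  set A := ∫ x, F x ^ p ∂μ with hAd
  set V := ∫ x, h x ^ q ∂μ with hVd
  set a := A ^ (1/p) with had
  set b := V ^ (1/q) with hbd
  have ha : 0 < a := Real.rpow_pos_of_pos hA _
  have hb : 0 < b := Real.rpow_pos_of_pos hV _
  have hap : a ^ p = A := by rw [had, ← Real.rpow_mul hA.le, one_div_mul_cancel hp0.ne', Real.rpow_one]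
  have hbq : b ^ q = V := by rw [hbd, ← Real.rpow_mul hV.le, one_div_mul_cancel hq0, Real.rpow_one]
  have key := fun x => rev_young hp0 hp1 hpq (x := F x / a) (y := h x / b)
    (div_nonneg (hF x) ha.le) (div_pos (hh x) hb)
  simp only [Real.div_rpow (hF _) ha.le, Real.div_rpow (hh _).le hb.le, hap, hbq] at key
  let D : X → ℝ := fun x => F x * h x / (a * b) - (F x ^ p / A / p + h x ^ q / V / q)
  have hD0 : ∀ x, 0 ≤ D x := fun x => by
    have := (key x).1
    simp only [D]; rw [mul_div_mul_comm]; linarith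
  have hi1 : Integrable (fun x => F x ^ p / A / p + h x ^ q / V / q) μ :=
    ((hFp.div_const _).div_const _).add ((hhq.div_const _).div_const _)
  have hi2 : Integrable (fun x => F x * h x / (a * b)) μ := hFh.div_const _
  have hDi : Integrable D μ := hi2.sub hi1
  have hDint : ∫ x, D x ∂μ = (∫ x, F x * h x ∂μ) / (a * b) - 1 := by
    simp only [D]
    rw [integral_sub hi2 hi1, integral_add ((hFp.div_const _).div_const _) ((hhq.div_const _).div_const _)]
    simp only [integral_div]
    rw [← hAd, ← hVd, div_self hA.ne', div_self hV.ne', hpq]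
  have hab : 0 < a * b := mul_pos ha hb
  constructor
  · have : 0 ≤ ∫ x, D x ∂μ := integral_nonneg hD0
    rw [hDint, sub_nonneg, le_div_iff₀ hab] at this
    linarith
  · intro heq
    have h0 : ∫ x, D x ∂μ = 0 := by rw [hDint, ← heq, div_self hab.ne', sub_self]
    rw [integral_eq_zero_iff_of_nonneg hD0 hDi] at h0
    refine ⟨a * (b ^ (q-1))⁻¹, by positivity, ?_⟩
    filter_upwards [h0] with x hx
    have h1 := (key x).2 (by
      simp only [D, Pi.zero_apply] at hx; rw [mul_div_mul_comm] at hx; linarith)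
    have hxx := hh x
    have h2 : F x ^ p = (A / V) * h x ^ q := by
      field_simp at h1 ⊢; linarith
    have h3 : F x = (F x ^ p) ^ (1 / p) := by
      rw [← Real.rpow_mul (hF x), mul_one_div_cancel hp0.ne', Real.rpow_one]
    rw [h3, h2, Real.mul_rpow (by positivity) (by positivity), Real.div_rpow hA.le hV.le,
      ← Real.rpow_mul hxx.le, hqp, ← hbq, ← Real.rpow_mul hb.le, hqp, div_eq_mul_inv, ← had]


section pots
variable {n : ℕ} {lam : ℝ}

lemma kern_cont (hl : 0 < lam) : Continuous fun p : SS n × SS n => dist p.1.1 p.2.1 ^ lam := by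
  refine Continuous.rpow_const ?_ fun p => Or.inr hl.le
  fun_prop

lemma dist_le_two (ξ η : SS n) : dist ξ.1 η.1 ≤ 2 := by
  have := dist_le_norm_add_norm ξ.1 η.1
  rw [SS.norm_eq, SS.norm_eq] at this; linarith

lemma kern_bound (hl : 0 < lam) (ξ η : SS n) : ‖dist ξ.1 η.1 ^ lam‖ ≤ 2 ^ lam := by
  rw [Real.norm_of_nonneg (by positivity)]
  exact Real.rpow_le_rpow dist_nonneg (dist_le_two ξ η) hl.le

lemma kern_int (hl : 0 < lam) {F : SS n → ℝ} (hF : Integrable F (sphereMeasure n)) (ξ : SS n) :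
    Integrable (fun η : SS n => F η * dist ξ.1 η.1 ^ lam) (sphereMeasure n) :=
  hF.mul_bdd (c := 2 ^ lam)
    ((kern_cont hl).comp (Continuous.prodMk_right ξ)).aestronglyMeasurable
    (.of_forall fun η => kern_bound hl ξ η)

lemma pot_cont (hl : 0 < lam) {F : SS n → ℝ} (hF : Integrable F (sphereMeasure n)) :
    Continuous (pot lam F) := by
  unfold pot
  refine continuous_of_dominated (bound := fun η => |F η| * 2 ^ lam)
    (fun ξ => (kern_int hl hF ξ).aestronglyMeasurable) (fun ξ => .of_forall fun η => ?_)
    (hF.abs.mul_const _) (.of_forall fun η => ?_)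
  · rw [norm_mul]
    exact mul_le_mul_of_nonneg_left (kern_bound hl ξ η) (abs_nonneg _)
  · have : Continuous fun ξ : SS n => dist ξ.1 η.1 ^ lam :=
      Continuous.rpow_const (by fun_prop) fun _ => Or.inr hl.le
    exact continuous_const.mul this

lemma pot_nonneg {F : SS n → ℝ} (hF0 : ∀ ω, 0 ≤ F ω) (ξ : SS n) : 0 ≤ pot lam F ξ :=
  integral_nonneg fun η => mul_nonneg (hF0 η) (by positivity)

lemma pot_pos (hn : 1 ≤ n) (hl : 0 < lam) {F : SS n → ℝ} (hF : Integrable F (sphereMeasure n))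
    (hF0 : ∀ ω, 0 ≤ F ω) (hne : ¬ F =ᵐ[sphereMeasure n] 0) (ξ : SS n) : 0 < pot lam F ξ := by
  refine lt_of_le_of_ne (pot_nonneg hF0 ξ) fun h => hne ?_
  have h1 := (integral_eq_zero_iff_of_nonneg (fun η => mul_nonneg (hF0 η) (by positivity))
    (kern_int hl hF ξ)).1 h.symm
  have h2 : ∀ᵐ η ∂(sphereMeasure n), η ≠ ξ := by
    rw [ae_iff]; simpa using sphereMeasure_singleton hn ξ
  filter_upwards [h1, h2] with η h3 h4
  have h5 : 0 < dist ξ.1 η.1 := dist_pos.2 fun h => h4 (Subtype.ext h.symm)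
  simpa [(Real.rpow_pos_of_pos h5 lam).ne'] using h3

lemma pot_congr {F G : SS n → ℝ} (h : F =ᵐ[sphereMeasure n] G) (ξ : SS n) :
    pot lam F ξ = pot lam G ξ :=
  integral_congr_ae (by filter_upwards [h] with η hη; rw [hη])

lemma prod_int (hl : 0 < lam) {F G : SS n → ℝ} (hF : Integrable F (sphereMeasure n))
    (hG : Integrable G (sphereMeasure n)) :
    Integrable (fun z : SS n × SS n => F z.1 * G z.2 * dist z.1.1 z.2.1 ^ lam)
      ((sphereMeasure n).prod (sphereMeasure n)) :=
  (hF.mul_prod hG).mul_bdd (c := 2 ^ lam) (kern_cont hl).aestronglyMeasurable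
    (.of_forall fun z => kern_bound hl z.1 z.2)

lemma prod_eq (hl : 0 < lam) {F G : SS n → ℝ} (hF : Integrable F (sphereMeasure n))
    (hG : Integrable G (sphereMeasure n)) :
    ∫ z : SS n × SS n, F z.1 * G z.2 * dist z.1.1 z.2.1 ^ lam
      ∂((sphereMeasure n).prod (sphereMeasure n)) = ∫ ξ, F ξ * pot lam G ξ ∂(sphereMeasure n) := by
  rw [integral_prod _ (prod_int hl hF hG)]
  refine integral_congr_ae (.of_forall fun ξ => ?_)
  simp only [pot]
  rw [← integral_const_mul]
  refine integral_congr_ae (.of_forall fun η => ?_)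
  simp only; ring

lemma pot_symm (hl : 0 < lam) {F G : SS n → ℝ} (hF : Integrable F (sphereMeasure n))
    (hG : Integrable G (sphereMeasure n)) :
    ∫ ξ, F ξ * pot lam G ξ ∂(sphereMeasure n) = ∫ ξ, G ξ * pot lam F ξ ∂(sphereMeasure n) := by
  rw [← prod_eq hl hF hG, ← prod_eq hl hG hF, ← integral_prod_swap]
  refine integral_congr_ae (.of_forall fun z => ?_)
  simp only [Prod.fst_swap, Prod.snd_swap]
  rw [dist_comm]; ring

lemma pot_isoS (R : EE n ≃ₗᵢ[ℝ] EE n) (F : SS n → ℝ) (ξ : SS n) :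
    pot lam (fun ω => F (isoS R ω)) ξ = pot lam F (isoS R ξ) := by
  unfold pot
  have he : MeasurableEmbedding (isoS R) := by
    refine (isoS_cont R).measurableEmbedding fun a b h => Subtype.ext ?_
    have := congrArg Subtype.val h
    simpa [isoS] using this
  conv_rhs => rw [← (isoS_mp R).integral_comp he]
  refine integral_congr_ae (.of_forall fun η => ?_)
  simp [isoS]

/-- `F` is balanced. -/
def SBalanced (lam : ℝ) (F : SS n → ℝ) : Prop :=
  ∀ w : EE n, ∫ ω, F ω ∂(sphereMeasure n) ≤ phi lam F w

lemma kf_joint : Continuous fun p : EE n × SS n => kf p.1 p.2 := by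
  unfold kf bt gam
  fun_prop

lemma phi_int {F : SS n → ℝ} (hF : Integrable F (sphereMeasure n)) (w : EE n) :
    Integrable (fun ω => F ω * kf w ω ^ (lam / 2)) (sphereMeasure n) := by
  have hc : Continuous fun ω => kf w ω ^ (lam/2) :=
    (kf_cont w).rpow_const fun ω => Or.inl (kf_pos w ω).ne'
  obtain ⟨C, hC⟩ := isCompact_univ.exists_bound_of_continuousOn hc.continuousOn
  exact hF.mul_bdd (c := C) hc.aestronglyMeasurable (.of_forall fun ω => hC ω trivial)

lemma phi_cont (hl : 0 < lam) {F : SS n → ℝ} (hF : Integrable F (sphereMeasure n)) :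
    Continuous (phi lam F) := by
  refine continuous_iff_continuousAt.2 fun w₀ => ?_
  have hc : Continuous fun p : EE n × SS n => kf p.1 p.2 ^ (lam / 2) :=
    kf_joint.rpow_const fun p => Or.inr (by positivity)
  obtain ⟨C, hC⟩ := ((isCompact_closedBall w₀ 1).prod isCompact_univ).exists_bound_of_continuousOn
    hc.continuousOn
  refine continuousAt_of_dominated (bound := fun ω => |F ω| * C)
    (.of_forall fun w => (phi_int hF w).aestronglyMeasurable) ?_ (hF.abs.mul_const _)
    (.of_forall fun ω => ?_)
  · filter_upwards [closedBall_mem_nhds w₀ one_pos] with w hw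
    refine .of_forall fun ω => ?_
    rw [norm_mul]
    exact mul_le_mul_of_nonneg_left (hC (w, ω) ⟨hw, trivial⟩) (abs_nonneg _)
  · exact (continuous_const.mul (hc.comp (Continuous.prodMk_left ω))).continuousAt

lemma rpow_dist_half (ξ η : SS n) : (dist ξ.1 η.1 ^ 2) ^ (lam / 2) = dist ξ.1 η.1 ^ lam := by
  rw [← Real.rpow_natCast, ← Real.rpow_mul dist_nonneg]; congr 1; push_cast; ring

lemma phi_lower (hl : 0 < lam) {F : SS n → ℝ} (hF : Integrable F (sphereMeasure n))
    (hF0 : ∀ ω, 0 ≤ F ω) (R : ℝ) (hR : 0 ≤ R) (ξ : SS n) :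
    (R / 2) ^ (lam / 2) * pot lam F ξ ≤ phi lam F (R • ξ.1) := by
  unfold pot phi
  rw [← integral_const_mul]
  refine integral_mono ((kern_int hl hF ξ).const_mul _) (phi_int hF _) fun η => ?_
  simp only
  have h1 : R / 2 * dist ξ.1 η.1 ^ 2 ≤ kf (R • ξ.1) η := by
    rw [kf_eq, dist_sq_S, real_inner_smul_right, real_inner_comm]
    have := norm_lt_gam (R • ξ.1)
    rw [norm_smul, SS.norm_eq, Real.norm_of_nonneg hR] at this
    nlinarith
  calc (R / 2) ^ (lam / 2) * (F η * dist ξ.1 η.1 ^ lam)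
      = F η * (R / 2 * dist ξ.1 η.1 ^ 2) ^ (lam / 2) := by
        rw [Real.mul_rpow (by positivity) (by positivity), rpow_dist_half]; ring
    _ ≤ _ := mul_le_mul_of_nonneg_left
        (Real.rpow_le_rpow (by positivity) h1 (by positivity)) (hF0 η)

lemma exists_min_phi (hn : 1 ≤ n) (hl : 0 < lam) {F : SS n → ℝ}
    (hF : Integrable F (sphereMeasure n))
    (hF0 : ∀ ω, 0 ≤ F ω) (hne : ¬ F =ᵐ[sphereMeasure n] 0) :
    ∃ v : EE n, ∀ w, phi lam F v ≤ phi lam F w := by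
  have hne' : Nonempty (SS n) := ⟨⟨EuclideanSpace.single 0 1, by simp⟩⟩
  obtain ⟨ξ₀, hξ₀⟩ := (pot_cont hl hF).exists_forall_le_of_hasCompactSupport
    (HasCompactSupport.of_compactSpace _)
  have hc0 := pot_pos hn hl hF hF0 hne ξ₀
  have hlim : Filter.Tendsto (phi lam F) (Filter.cocompact (EE n)) Filter.atTop := by
    have h1 : Filter.Tendsto (fun w : EE n => (‖w‖ / 2) ^ (lam / 2) * pot lam F ξ₀)
        (Filter.cocompact (EE n)) Filter.atTop := by
      refine Filter.Tendsto.atTop_mul_const hc0 ?_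
      refine (tendsto_rpow_atTop (by positivity)).comp ?_
      exact (tendsto_norm_cocompact_atTop).atTop_div_const (by norm_num)
    refine Filter.tendsto_atTop_mono' _ ?_ h1
    have h2 : ∀ᶠ w : EE n in Filter.cocompact (EE n), w ∈ ({0}ᶜ : Set (EE n)) :=
      (isCompact_singleton).compl_mem_cocompact
    filter_upwards [h2] with w hw
    have hw' : ‖w‖ ≠ 0 := norm_ne_zero_iff.2 hw
    let ξ : SS n := ⟨‖w‖⁻¹ • w, by simp [norm_smul, hw']⟩
    have h3 := phi_lower hl hF hF0 ‖w‖ (norm_nonneg _) ξ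
    have h4 : ‖w‖ • ξ.1 = w := by simp [ξ, smul_smul, hw']
    rw [h4] at h3
    refine le_trans (mul_le_mul_of_nonneg_left (hξ₀ ξ) (by positivity)) h3
  exact (phi_cont hl hF).exists_forall_le hlim

lemma exists_balanced (hn : 1 ≤ n) (hl : 0 < lam) {F : SS n → ℝ}
    (hF : Integrable F (sphereMeasure n))
    (hF0 : ∀ ω, 0 ≤ F ω) (hne : ¬ F =ᵐ[sphereMeasure n] 0) :
    ∃ v : EE n, SBalanced lam (tr lam v F) := by
  obtain ⟨m, hm⟩ := exists_min_phi hn hl hF hF0 hne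
  refine ⟨-m, fun w => ?_⟩
  have h0 : ∫ ω, tr lam (-m) F ω ∂(sphereMeasure n) = phi lam (tr lam (-m) F) 0 := by
    unfold phi
    simp [kf_eq, gam]
  rw [h0, tr_phi, tr_phi]
  have : bx (-m) (gam (0 : EE n)) 0 = m := by simp [bx, gam]
  rw [this]
  exact hm _

lemma add_rpow_le' {x y s : ℝ} (hx : 0 ≤ x) (hy : 0 ≤ y) (hs : 0 ≤ s) :
    (x + y) ^ s ≤ (2 * x) ^ s + (2 * y) ^ s := by
  rcases le_total x y with h | h
  · have : (x + y) ^ s ≤ (2 * y) ^ s := Real.rpow_le_rpow (by positivity) (by linarith) hs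
    have : 0 ≤ (2 * x) ^ s := by positivity
    linarith
  · have : (x + y) ^ s ≤ (2 * x) ^ s := Real.rpow_le_rpow (by positivity) (by linarith) hs
    have : 0 ≤ (2 * y) ^ s := by positivity
    linarith

lemma balanced_lower (n : ℕ) (hl : 0 < lam) : ∃ c : ℝ, 0 < c ∧ ∀ F : SS n → ℝ,
    Integrable F (sphereMeasure n) → (∀ ω, 0 ≤ F ω) → SBalanced lam F →
    ∀ ξ, c * ∫ ω, F ω ∂(sphereMeasure n) ≤ pot lam F ξ := by
  set s := lam / 2 with hs
  have hs0 : 0 < s := by positivity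
  set ε : ℝ := (1/2 : ℝ) ^ (1 / s) / 2 with hε
  have hε0 : 0 < ε := by positivity
  have hε1 : ε < 1 := by
    have : (1/2 : ℝ) ^ (1 / s) ≤ 1 := Real.rpow_le_one (by norm_num) (by norm_num) (by positivity)
    rw [hε]; linarith
  have hεs : (2 * ε) ^ s = 1 / 2 := by
    rw [hε, mul_div_cancel₀ _ (by norm_num), ← Real.rpow_mul (by norm_num),
      one_div_mul_cancel hs0.ne', Real.rpow_one]
  set R : ℝ := (1 / ε - ε) / 2 with hR
  have hR0 : 0 < R := by
    have : 1 < 1 / ε := by rw [lt_div_iff₀ hε0]; linarith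
    rw [hR]; linarith
  refine ⟨1 / (2 * R ^ s), by positivity, fun F hF hF0 hB ξ => ?_⟩
  have hb := hB (R • ξ.1)
  have hg : gam (R • ξ.1) = ε + R := by
    have h1 : gam (R • ξ.1) ^ 2 = (ε + R) ^ 2 := by
      rw [gam_sq, norm_smul, SS.norm_eq, Real.norm_of_nonneg hR0.le, hR]
      field_simp; ring
    exact (sq_eq_sq₀ (gam_pos _).le (by positivity)).1 h1
  have hup : phi lam F (R • ξ.1) ≤
      ∫ ω, (1 / 2 * F ω + R ^ s * (F ω * dist ξ.1 ω.1 ^ lam)) ∂(sphereMeasure n) := by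
    refine integral_mono (phi_int hF _) ((hF.const_mul _).add ((kern_int hl hF ξ).const_mul _))
      fun η => ?_
    simp only
    have h1 : kf (R • ξ.1) η = ε + R / 2 * dist ξ.1 η.1 ^ 2 := by
      rw [kf_eq, dist_sq_S, real_inner_smul_right, real_inner_comm, hg]; ring
    have h2 := add_rpow_le' hε0.le (show 0 ≤ R / 2 * dist ξ.1 η.1 ^ 2 by positivity) hs0.le
    rw [← h1, hεs, show 2 * (R / 2 * dist ξ.1 η.1 ^ 2) = R * dist ξ.1 η.1 ^ 2 by ring,
      Real.mul_rpow hR0.le (by positivity), hs, rpow_dist_half, ← hs] at h2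
    have := mul_le_mul_of_nonneg_left h2 (hF0 η)
    linarith
  rw [integral_add (hF.const_mul _) ((kern_int hl hF ξ).const_mul _), integral_const_mul,
    integral_const_mul] at hup
  change _ ≤ _ + R ^ s * pot lam F ξ at hup
  rw [div_mul_eq_mul_div, one_mul, div_le_iff₀ (by positivity)]
  linarith

lemma kf_smul_joint (e : EE n) : Continuous fun p : ℝ × SS n => kf (p.1 • e) p.2 := by
  simp only [kf_eq, gam]
  have h1 : Continuous fun p : ℝ × SS n => p.1 • e := continuous_fst.smul continuous_const
  have h2 : Continuous fun p : ℝ × SS n => p.2.1 := continuous_subtype_val.comp continuous_snd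
  exact ((continuous_const.add (h1.norm.pow 2)).sqrt).sub (h2.inner h1)

set_option maxHeartbeats 1000000 in
lemma balanced_centered (hl : 0 < lam) {F : SS n → ℝ}
    (hF : Integrable F (sphereMeasure n)) (hB : SBalanced lam F) (e : EE n) :
    ∫ ω, F ω * ⟪ω.1, e⟫ ∂(sphereMeasure n) = 0 := by
  set s := lam / 2 with hs
  have hs0 : 0 < s := by positivity
  let k' : ℝ → SS n → ℝ := fun t ω => t * ‖e‖ ^ 2 / gam (t • e) - ⟪ω.1, e⟫
  have hgam : ∀ t : ℝ, HasDerivAt (fun t : ℝ => gam (t • e)) (t * ‖e‖ ^ 2 / gam (t • e)) t := by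
    intro t
    have h1 : HasDerivAt (fun t : ℝ => 1 + t ^ 2 * ‖e‖ ^ 2) (2 * t * ‖e‖ ^ 2) t := by
      have := ((hasDerivAt_pow 2 t).mul_const (‖e‖ ^ 2)).const_add 1
      convert! this using 1; simp
    have h2 := h1.sqrt (by positivity)
    have h3 : (fun t : ℝ => gam (t • e)) = fun t => √(1 + t ^ 2 * ‖e‖ ^ 2) := by
      funext t; simp [gam, norm_smul, mul_pow]
    have h4 := congrFun h3 t
    rw [h3]
    convert! h2 using 1
    rw [h4]
    have : 0 < √(1 + t ^ 2 * ‖e‖ ^ 2) := Real.sqrt_pos.2 (by positivity)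
    field_simp
  have hk : ∀ t ω, HasDerivAt (fun t : ℝ => kf (t • e) ω) (k' t ω) t := by
    intro t ω
    have h1 := (hgam t).sub ((hasDerivAt_id t).mul_const ⟪ω.1, e⟫)
    convert! h1 using 1
    · funext t; simp [kf_eq, real_inner_smul_right]
    · simp [k']
  let f : ℝ → SS n → ℝ := fun t ω => F ω * kf (t • e) ω ^ s
  let g : ℝ → SS n → ℝ := fun t ω => k' t ω * s * kf (t • e) ω ^ (s - 1)
  have hgc : Continuous fun p : ℝ × SS n => g p.1 p.2 := by
    have hc1 : Continuous fun p : ℝ × SS n => gam (p.1 • e) := by unfold gam; fun_prop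
    have hc2 : Continuous fun p : ℝ × SS n => kf (p.1 • e) p.2 :=
      kf_smul_joint e
    have hc3 : Continuous fun p : ℝ × SS n => p.1 * ‖e‖ ^ 2 := continuous_fst.mul continuous_const
    have hc4 : Continuous fun p : ℝ × SS n => ⟪p.2.1, e⟫ :=
      (continuous_subtype_val.comp continuous_snd).inner continuous_const
    have hc5 : Continuous fun p : ℝ × SS n => kf (p.1 • e) p.2 ^ (s - 1) :=
      hc2.rpow_const fun p => Or.inl (kf_pos _ _).ne'
    exact (((hc3.div hc1 fun p => (gam_pos _).ne').sub hc4).mul continuous_const).mul hc5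
  obtain ⟨C, hC⟩ := ((isCompact_closedBall (0:ℝ) 1).prod isCompact_univ).exists_bound_of_continuousOn
    hgc.continuousOn (s := closedBall (0:ℝ) 1 ×ˢ Set.univ)
  have hd := hasDerivAt_integral_of_dominated_loc_of_deriv_le (μ := sphereMeasure n)
    (F := f) (F' := fun t ω => F ω * g t ω) (x₀ := 0) (s := ball 0 1) (bound := fun ω => |F ω| * C)
    (ball_mem_nhds _ one_pos)
    (.of_forall fun t => (phi_int (lam := lam) hF (t • e)).aestronglyMeasurable)
    (phi_int (lam := lam) hF _)
    (hF.aestronglyMeasurable.mul (hgc.comp (Continuous.prodMk_right 0)).aestronglyMeasurable)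
    (.of_forall fun ω t ht => by
      rw [norm_mul]
      exact mul_le_mul_of_nonneg_left (hC (t, ω) ⟨ball_subset_closedBall ht, trivial⟩) (abs_nonneg _))
    (hF.abs.mul_const _)
    (.of_forall fun ω t _ => ((hk t ω).rpow_const (Or.inl (kf_pos _ _).ne')).const_mul (F ω))
  have hmin : IsLocalMin (fun t => ∫ ω, f t ω ∂(sphereMeasure n)) 0 := by
    refine .of_forall fun t => ?_
    have := hB (t • e)
    refine le_trans (le_of_eq ?_) this
    refine integral_congr_ae (.of_forall fun ω => ?_)
    simp [f, kf_eq, gam]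
  have h0 := hmin.hasDerivAt_eq_zero hd.2
  have : ∀ ω, F ω * g 0 ω = -s * (F ω * ⟪ω.1, e⟫) := by
    intro ω; simp [g, k', kf_eq, gam]; ring
  simp only [this] at h0
  rw [integral_const_mul] at h0
  rcases mul_eq_zero.1 h0 with h | h
  · linarith
  · exact h
end pots


section minimizer
variable {n : ℕ} {lam p q : ℝ}

/-- Exponent conditions. -/
structure Expo (n : ℕ) (lam p q : ℝ) : Prop where
  hn : 1 ≤ n
  hl : 0 < lam
  hp : ((n:ℝ) + lam/2) * p = n
  hq : lam / 2 * q = -n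

namespace Expo
lemma n0 (E : Expo n lam p q) : (0:ℝ) < n := by exact_mod_cast E.hn
lemma p0 (E : Expo n lam p q) : 0 < p := by
  have := E.n0; have := E.hl; have := E.hp
  by_contra h
  push Not at h
  nlinarith
lemma p1 (E : Expo n lam p q) : p < 1 := by
  have := E.n0; have := E.hl; have := E.hp
  by_contra h
  push Not at h
  nlinarith
lemma q0 (E : Expo n lam p q) : q < 0 := by
  have := E.n0; have := E.hl; have := E.hq
  by_contra h
  push Not at h
  nlinarith
lemma pq (E : Expo n lam p q) : 1 / p + 1 / q = 1 := by
  have h1 := E.n0; have h2 := E.p0; have h3 := E.q0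
  have e1 : 1 / p = ((n:ℝ) + lam/2) / n := by rw [div_eq_div_iff h2.ne' h1.ne', E.hp]; ring
  have e2 : 1 / q = - (lam/2) / n := by
    rw [div_eq_div_iff h3.ne h1.ne']; linarith [E.hq]
  rw [e1, e2]; field_simp; ring
lemma qp (E : Expo n lam p q) : (q - 1) * p = q := by
  have h := E.pq; have h2 := E.p0; have h3 := E.q0.ne
  field_simp at h; linarith
end Expo

/-- The `L^p` quantity. -/
noncomputable def np (p : ℝ) (F : SS n → ℝ) : ℝ := (∫ ω, F ω ^ p ∂(sphereMeasure n)) ^ (1 / p)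
/-- The `L^q` quantity of the potential. -/
noncomputable def nq (lam q : ℝ) (F : SS n → ℝ) : ℝ :=
  (∫ ω, pot lam F ω ^ q ∂(sphereMeasure n)) ^ (1 / q)

/-- Admissible functions. -/
structure Adm (F : SS n → ℝ) : Prop where
  int : Integrable F (sphereMeasure n)
  nonneg : ∀ ω, 0 ≤ F ω
  ne : ¬ F =ᵐ[sphereMeasure n] 0

lemma sphere_ne : Nonempty (SS n) := ⟨⟨EuclideanSpace.single 0 1, by simp⟩⟩

lemma sphereMeasure_ne : sphereMeasure n ≠ 0 := by
  have := sphere_ne (n := n)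
  exact (Measure.measure_univ_pos.1 (isOpen_univ.measure_pos _ Set.univ_nonempty))

lemma cont_int {f : SS n → ℝ} (hf : Continuous f) : Integrable f (sphereMeasure n) :=
  hf.integrable_of_hasCompactSupport (HasCompactSupport.of_compactSpace _)

lemma cont_int_pos {f : SS n → ℝ} (hf : Continuous f) (h : ∀ ω, 0 < f ω) :
    0 < ∫ ω, f ω ∂(sphereMeasure n) := by
  have := sphereMeasure_ne (n := n)
  rw [integral_pos_iff_support_of_nonneg (fun ω => (h ω).le) (cont_int hf)]
  have : Function.support f = Set.univ := by ext ω; simp [(h ω).ne']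
  rw [this]
  exact Measure.measure_univ_pos.2 sphereMeasure_ne

lemma Adm.of_cont {f : SS n → ℝ} (hf : Continuous f) (h : ∀ ω, 0 < f ω) : Adm f := by
  refine ⟨cont_int hf, fun ω => (h ω).le, fun h0 => ?_⟩
  have h1 := cont_int_pos hf h
  rw [integral_congr_ae h0] at h1
  simp at h1

lemma Adm.ipos {F : SS n → ℝ} (h : Adm F) : 0 < ∫ ω, F ω ∂(sphereMeasure n) := by
  refine lt_of_le_of_ne (integral_nonneg h.nonneg) fun h0 => h.ne ?_
  exact (integral_eq_zero_iff_of_nonneg h.nonneg h.int).1 h0.symm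

lemma Adm.tr {F : SS n → ℝ} (h : Adm F) (v : EE n) : Adm (tr lam v F) := by
  refine ⟨tr_integrable lam v F h.int, fun ω => mul_nonneg (h.nonneg _)
    (Real.rpow_nonneg (kf_pos _ _).le _), fun h0 => h.ne ?_⟩
  refine mob_ae v (fun ω => F ω = 0) ?_
  filter_upwards [h0] with ω hω
  have := Real.rpow_pos_of_pos (kf_pos v ω) (-((n:ℝ) + lam / 2))
  exact (mul_eq_zero.1 hω).resolve_right this.ne'

lemma Adm.smul {F : SS n → ℝ} (h : Adm F) {c : ℝ} (hc : 0 < c) : Adm (fun ω => c * F ω) := by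
  refine ⟨h.int.const_mul c, fun ω => mul_nonneg hc.le (h.nonneg ω), fun h0 => h.ne ?_⟩
  filter_upwards [h0] with ω hω
  simpa [hc.ne'] using hω

lemma Adm.pint (E : Expo n lam p q) {F : SS n → ℝ} (h : Adm F) :
    Integrable (fun ω => F ω ^ p) (sphereMeasure n) := by
  refine ((integrable_const (1:ℝ)).add h.int).mono'
    (h.int.aestronglyMeasurable.aemeasurable.pow_const p).aestronglyMeasurable
    (.of_forall fun ω => ?_)
  have h0 := h.nonneg ω
  rw [Real.norm_of_nonneg (by positivity)]
  simp only [Pi.add_apply]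
  rcases le_total (F ω) 1 with h1 | h1
  · have := Real.rpow_le_one h0 h1 E.p0.le; linarith
  · have := Real.rpow_le_rpow_of_exponent_le h1 E.p1.le
    rw [Real.rpow_one] at this; linarith

lemma Adm.ppos (E : Expo n lam p q) {F : SS n → ℝ} (h : Adm F) :
    0 < ∫ ω, F ω ^ p ∂(sphereMeasure n) := by
  have h1 : ∀ ω, 0 ≤ F ω ^ p := fun ω => Real.rpow_nonneg (h.nonneg ω) _
  refine lt_of_le_of_ne (integral_nonneg h1) fun h0 => h.ne ?_
  have := (integral_eq_zero_iff_of_nonneg h1 (h.pint E)).1 h0.symm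
  filter_upwards [this] with ω hω
  simpa using (Real.rpow_eq_zero (h.nonneg ω) E.p0.ne').1 hω

lemma Adm.np_pos (E : Expo n lam p q) {F : SS n → ℝ} (h : Adm F) : 0 < np p F :=
  Real.rpow_pos_of_pos (h.ppos E) _

lemma Adm.pot_pos (E : Expo n lam p q) {F : SS n → ℝ} (h : Adm F) (ξ : SS n) : 0 < pot lam F ξ :=
  _root_.pot_pos E.hn E.hl h.int h.nonneg h.ne ξ

lemma Adm.potq_cont (E : Expo n lam p q) {F : SS n → ℝ} (h : Adm F) (s : ℝ) :
    Continuous fun ξ => pot lam F ξ ^ s :=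
  (pot_cont E.hl h.int).rpow_const fun ξ => Or.inl (h.pot_pos E ξ).ne'

lemma Adm.qpos (E : Expo n lam p q) {F : SS n → ℝ} (h : Adm F) :
    0 < ∫ ω, pot lam F ω ^ q ∂(sphereMeasure n) :=
  cont_int_pos (h.potq_cont E q) fun ω => Real.rpow_pos_of_pos (h.pot_pos E ω) _

lemma Adm.nq_pos (E : Expo n lam p q) {F : SS n → ℝ} (h : Adm F) : 0 < nq lam q F :=
  Real.rpow_pos_of_pos (h.qpos E) _

lemma np_tr (E : Expo n lam p q) {F : SS n → ℝ} (h : Adm F) (v : EE n) :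
    np p (tr lam v F) = np p F := by
  unfold np; rw [tr_pow lam v F h.nonneg p E.hp]

lemma nq_tr (E : Expo n lam p q) {F : SS n → ℝ} (h : Adm F) (v : EE n) :
    nq lam q (tr lam v F) = nq lam q F := by
  unfold nq; rw [tr_pot_pow lam v F (fun ω => (h.pot_pos E ω).le) q E.hq]

lemma pot_smul (F : SS n → ℝ) (c : ℝ) (ξ : SS n) :
    pot lam (fun ω => c * F ω) ξ = c * pot lam F ξ := by
  unfold pot; rw [← integral_const_mul]; simp only [mul_assoc]

lemma np_smul (E : Expo n lam p q) {F : SS n → ℝ} (h : Adm F) {c : ℝ} (hc : 0 < c) :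
    np p (fun ω => c * F ω) = c * np p F := by
  unfold np
  simp only [Real.mul_rpow hc.le (h.nonneg _)]
  rw [integral_const_mul, Real.mul_rpow (by positivity) (h.ppos E).le, ← Real.rpow_mul hc.le,
    mul_one_div_cancel E.p0.ne', Real.rpow_one]

lemma nq_smul (E : Expo n lam p q) {F : SS n → ℝ} (h : Adm F) {c : ℝ} (hc : 0 < c) :
    nq lam q (fun ω => c * F ω) = c * nq lam q F := by
  unfold nq
  simp only [pot_smul, Real.mul_rpow hc.le (h.pot_pos E _).le]
  rw [integral_const_mul, Real.mul_rpow (by positivity) (h.qpos E).le, ← Real.rpow_mul hc.le,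
    mul_one_div_cancel E.q0.ne, Real.rpow_one]

lemma Adm.next (E : Expo n lam p q) {F : SS n → ℝ} (h : Adm F) :
    Adm fun ω => pot lam F ω ^ (q - 1) :=
  Adm.of_cont (h.potq_cont E _) fun ω => Real.rpow_pos_of_pos (h.pot_pos E ω) _

lemma holder_pair (E : Expo n lam p q) {F G : SS n → ℝ} (h : Adm F) (hG : Adm G) :
    np p F * nq lam q G ≤ ∫ ω, F ω * pot lam G ω ∂(sphereMeasure n) ∧
    (np p F * nq lam q G = ∫ ω, F ω * pot lam G ω ∂(sphereMeasure n) →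
      ∃ c : ℝ, 0 < c ∧ ∀ᵐ ω ∂(sphereMeasure n), F ω = c * pot lam G ω ^ (q - 1)) := by
  refine rev_holder E.p0 E.p1 E.pq F (pot lam G) h.nonneg (hG.pot_pos E) (h.pint E)
    (cont_int (hG.potq_cont E q)) ?_ (h.ppos E) (hG.qpos E)
  obtain ⟨C, hC⟩ := isCompact_univ.exists_bound_of_continuousOn (pot_cont E.hl hG.int).continuousOn
  exact h.int.mul_bdd (c := C) (pot_cont E.hl hG.int).aestronglyMeasurable
    (.of_forall fun ω => hC ω trivial)

lemma improve (E : Expo n lam p q) {F : SS n → ℝ} (h : Adm F) :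
    ∫ ω, F ω * pot lam (fun ω => pot lam F ω ^ (q - 1)) ω ∂(sphereMeasure n) =
      nq lam q F * np p (fun ω => pot lam F ω ^ (q - 1)) := by
  rw [pot_symm E.hl h.int (h.next E).int]
  have e1 : ∀ ω, pot lam F ω ^ (q - 1) * pot lam F ω = pot lam F ω ^ q := fun ω => by
    have := h.pot_pos E ω
    rw [Real.rpow_sub_one this.ne']; field_simp
  have e2 : ∀ ω, (pot lam F ω ^ (q - 1)) ^ p = pot lam F ω ^ q := fun ω => by
    rw [← Real.rpow_mul (h.pot_pos E ω).le, E.qp]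
  unfold np nq
  simp only [e1, e2]
  rw [← Real.rpow_add (h.qpos E), add_comm (1 / q), E.pq, Real.rpow_one]


/-- The kernel as a continuous map into continuous functions. -/
noncomputable def kap (n : ℕ) (lam : ℝ) (hl : 0 < lam) : C(SS n, C(SS n, ℝ)) :=
  ContinuousMap.curry ⟨fun p : SS n × SS n => dist p.1.1 p.2.1 ^ lam, kern_cont hl⟩

/-- The compact class. -/
def UU (n : ℕ) (lam : ℝ) (hl : 0 < lam) (c : ℝ) : Set (BoundedContinuousFunction (SS n) ℝ) :=
  {u | (∀ ξ, u ξ ∈ Set.Icc c (2 ^ lam)) ∧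
    ∀ ξ ξ', dist (u ξ) (u ξ') ≤ dist (kap n lam hl ξ) (kap n lam hl ξ')}

lemma UU_compact (hl : 0 < lam) (c : ℝ) : IsCompact (UU n lam hl c) := by
  refine BoundedContinuousFunction.arzela_ascoli₂ (Set.Icc c (2 ^ lam)) isCompact_Icc _ ?_
    (fun f x hf => hf.1 x) ?_
  · have e : UU n lam hl c = (⋂ ξ, {u | u ξ ∈ Set.Icc c (2 ^ lam)}) ∩ ⋂ ξ, ⋂ ξ',
        {u | dist (u ξ) (u ξ') ≤ dist (kap n lam hl ξ) (kap n lam hl ξ')} := by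
      ext u; simp [UU]
    rw [e]
    have hc : ∀ ξ : SS n, Continuous fun u : BoundedContinuousFunction (SS n) ℝ => u ξ :=
      fun ξ => continuous_eval_const ξ
    refine (isClosed_iInter fun ξ => isClosed_Icc.preimage (hc ξ)).inter
      (isClosed_iInter fun ξ => isClosed_iInter fun ξ' => ?_)
    exact isClosed_le ((hc ξ).dist (hc ξ')) continuous_const
  · intro ξ₀
    rw [Metric.equicontinuousAt_iff_right]
    intro ε hε
    have hk := (kap n lam hl).continuous.tendsto ξ₀
    have := (Metric.tendsto_nhds.1 hk) ε hε
    filter_upwards [this] with ξ hξ u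
    refine lt_of_le_of_lt (u.2.2 ξ₀ ξ) ?_
    rwa [dist_comm]

lemma pot_mem (hl : 0 < lam) {c : ℝ} {F : SS n → ℝ} (hF : Integrable F (sphereMeasure n))
    (h0 : ∀ ω, 0 ≤ F ω) (h1 : ∫ ω, F ω ∂(sphereMeasure n) = 1) (hc : ∀ ξ, c ≤ pot lam F ξ) :
    BoundedContinuousFunction.mkOfCompact ⟨pot lam F, pot_cont hl hF⟩ ∈ UU n lam hl c := by
  refine ⟨fun ξ => ⟨hc ξ, ?_⟩, fun ξ ξ' => ?_⟩
  · change pot lam F ξ ≤ _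
    have : pot lam F ξ ≤ ∫ ω, F ω * 2 ^ lam ∂(sphereMeasure n) :=
      integral_mono (kern_int hl hF ξ) (hF.mul_const _) fun ω =>
        mul_le_mul_of_nonneg_left (le_trans (le_abs_self _) (kern_bound hl ξ ω)) (h0 ω)
    rwa [integral_mul_const, h1, one_mul] at this
  · change dist (pot lam F ξ) (pot lam F ξ') ≤ _
    have e : pot lam F ξ - pot lam F ξ' =
        ∫ ω, (F ω * dist ξ.1 ω.1 ^ lam - F ω * dist ξ'.1 ω.1 ^ lam) ∂(sphereMeasure n) :=
      (integral_sub (kern_int hl hF ξ) (kern_int hl hF ξ')).symm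
    rw [Real.dist_eq, e]
    refine le_trans abs_integral_le_integral_abs ?_
    have : ∫ ω, |F ω * dist ξ.1 ω.1 ^ lam - F ω * dist ξ'.1 ω.1 ^ lam| ∂(sphereMeasure n) ≤
        ∫ ω, F ω * dist (kap n lam hl ξ) (kap n lam hl ξ') ∂(sphereMeasure n) := by
      refine integral_mono ((kern_int hl hF ξ).sub (kern_int hl hF ξ')).abs (hF.mul_const _)
        fun ω => ?_
      simp only
      rw [← mul_sub, abs_mul, abs_of_nonneg (h0 ω)]
      exact mul_le_mul_of_nonneg_left
        (ContinuousMap.dist_apply_le_dist (f := kap n lam hl ξ) (g := kap n lam hl ξ') ω) (h0 ω)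
    rwa [integral_mul_const, h1, one_mul] at this

/-- Functional on potentials. -/
noncomputable def RT (n : ℕ) (lam p q : ℝ) (u : BoundedContinuousFunction (SS n) ℝ) : ℝ :=
  nq lam q (fun ω => u ω ^ (q - 1)) / np p (fun ω => u ω ^ (q - 1))

lemma RT_cont (E : Expo n lam p q) {c : ℝ} (hc : 0 < c) :
    ContinuousOn (RT n lam p q) (UU n lam E.hl c) := by
  have hq0 := E.q0
  have hNE := sphere_ne (n := n)
  have hev : ∀ (s : ℝ) (ω : SS n), ContinuousOn
      (fun u : BoundedContinuousFunction (SS n) ℝ => u ω ^ s) (UU n lam E.hl c) := fun s ω =>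
    (continuous_eval_const ω).continuousOn.rpow_const
      fun u hu => Or.inl (hc.trans_le (hu.1 ω).1).ne'
  have hucont : ∀ (s : ℝ), ∀ u ∈ UU n lam E.hl c, Continuous fun ω => u ω ^ s := fun s u hu =>
    u.continuous.rpow_const fun ω => Or.inl (hc.trans_le (hu.1 ω).1).ne'
  have hadm : ∀ u ∈ UU n lam E.hl c, Adm fun ω => u ω ^ (q - 1) := fun u hu =>
    Adm.of_cont (hucont _ u hu) fun ω => Real.rpow_pos_of_pos (hc.trans_le (hu.1 ω).1) _
  have hub : ∀ u ∈ UU n lam E.hl c, ∀ ω, ∀ s : ℝ, s ≤ 0 → u ω ^ s ≤ c ^ s := fun u hu ω s hs =>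
    Real.rpow_le_rpow_of_nonpos hc (hu.1 ω).1 hs
  have hone : Adm (fun _ : SS n => (1:ℝ)) := Adm.of_cont continuous_const fun _ => one_pos
  -- potentials
  have hpc : ∀ ξ, ContinuousOn (fun u : BoundedContinuousFunction (SS n) ℝ =>
      pot lam (fun ω => u ω ^ (q - 1)) ξ) (UU n lam E.hl c) := by
    intro ξ
    refine continuousOn_of_dominated (bound := fun _ => c ^ (q - 1) * 2 ^ lam)
      (fun u hu => (kern_int E.hl (hadm u hu).int ξ).aestronglyMeasurable)
      (fun u hu => .of_forall fun ω => ?_) (integrable_const _)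
      (.of_forall fun ω => (hev (q - 1) ω).mul continuousOn_const)
    rw [norm_mul]
    refine mul_le_mul ?_ (kern_bound E.hl ξ ω) (norm_nonneg _) (by positivity)
    rw [Real.norm_of_nonneg ((hadm u hu).nonneg ω)]
    exact hub u hu ω _ (by linarith)
  obtain ⟨ξ₀, hξ₀⟩ := (pot_cont E.hl hone.int).exists_forall_le_of_hasCompactSupport
    (HasCompactSupport.of_compactSpace _)
  set d := ((2:ℝ) ^ lam) ^ (q - 1) * pot lam (fun _ : SS n => (1:ℝ)) ξ₀ with hd
  have hd0 : 0 < d := mul_pos (by positivity) (hone.pot_pos E ξ₀)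
  have hpl : ∀ u ∈ UU n lam E.hl c, ∀ ξ, d ≤ pot lam (fun ω => u ω ^ (q - 1)) ξ := by
    intro u hu ξ
    refine le_trans (mul_le_mul_of_nonneg_left (hξ₀ ξ) (by positivity)) ?_
    rw [← pot_smul]
    refine integral_mono (kern_int E.hl (hone.int.const_mul _) ξ)
      (kern_int E.hl (hadm u hu).int ξ) fun ω => ?_
    refine mul_le_mul_of_nonneg_right ?_ (by positivity)
    rw [mul_one]
    exact Real.rpow_le_rpow_of_nonpos (hc.trans_le (hu.1 ω).1) (hu.1 ω).2 (by linarith)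
  refine ContinuousOn.div ?_ ?_ fun u hu => ((hadm u hu).np_pos E).ne'
  · refine ContinuousOn.rpow_const ?_ fun u hu => Or.inl ((hadm u hu).qpos E).ne'
    refine continuousOn_of_dominated (bound := fun _ => d ^ q)
      (fun u hu => ((hadm u hu).potq_cont E q).aestronglyMeasurable)
      (fun u hu => .of_forall fun ξ => ?_) (integrable_const _)
      (.of_forall fun ξ => (hpc ξ).rpow_const fun u hu => Or.inl ((hadm u hu).pot_pos E ξ).ne')
    rw [Real.norm_of_nonneg (Real.rpow_nonneg ((hadm u hu).pot_pos E ξ).le _)]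
    exact Real.rpow_le_rpow_of_nonpos hd0 (hpl u hu ξ) hq0.le
  · refine ContinuousOn.rpow_const ?_ fun u hu => Or.inl ((hadm u hu).ppos E).ne'
    refine continuousOn_of_dominated (bound := fun _ => (c ^ (q - 1)) ^ p)
      (fun u hu => ((hadm u hu).pint E).aestronglyMeasurable)
      (fun u hu => .of_forall fun ω => ?_) (integrable_const _)
      (.of_forall fun ω => (hev (q-1) ω).rpow_const fun u hu => Or.inr E.p0.le)
    have h0 := (hadm u hu).nonneg ω
    rw [Real.norm_of_nonneg (Real.rpow_nonneg h0 _)]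
    exact Real.rpow_le_rpow h0 (hub u hu ω _ (by linarith)) E.p0.le

lemma exists_minimizer (E : Expo n lam p q) : ∃ m : ℝ, ∃ G : SS n → ℝ, Adm G ∧
    nq lam q G = m * np p G ∧ ∀ F : SS n → ℝ, Adm F → m * np p F ≤ nq lam q F := by
  obtain ⟨c, hc, hlow⟩ := balanced_lower n E.hl
  have key : ∀ F : SS n → ℝ, Adm F → ∃ u ∈ UU n lam E.hl c,
      RT n lam p q u * np p F ≤ nq lam q F := by
    intro F hF
    obtain ⟨v, hv⟩ := exists_balanced E.hn E.hl hF.int hF.nonneg hF.ne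
    have hF1 : Adm (tr lam v F) := hF.tr v
    set I := ∫ ω, tr lam v F ω ∂(sphereMeasure n) with hI
    have hI0 : 0 < I := hF1.ipos
    have hF2 := hF1.smul (inv_pos.2 hI0)
    have hpot : ∀ ξ, c ≤ pot lam (fun ω => I⁻¹ * tr lam v F ω) ξ := by
      intro ξ
      rw [pot_smul, inv_mul_eq_div, le_div_iff₀ hI0]
      exact hlow _ hF1.int hF1.nonneg hv ξ
    have hmem := pot_mem E.hl hF2.int hF2.nonneg
      (by rw [integral_const_mul, ← hI, inv_mul_cancel₀ hI0.ne']) hpot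
    refine ⟨_, hmem, ?_⟩
    have h1 := (holder_pair E hF2 (hF2.next E)).1
    rw [improve E hF2, np_smul E hF1 (inv_pos.2 hI0), nq_smul E hF1 (inv_pos.2 hI0), np_tr E hF,
      nq_tr E hF] at h1
    have hpos := (hF2.next E).np_pos E
    change nq lam q (fun ω => pot lam (fun ω => I⁻¹ * tr lam v F ω) ω ^ (q - 1)) /
      np p (fun ω => pot lam (fun ω => I⁻¹ * tr lam v F ω) ω ^ (q - 1)) * np p F ≤ nq lam q F
    rw [div_mul_eq_mul_div, div_le_iff₀ hpos]
    have hi : 0 < I⁻¹ := inv_pos.2 hI0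
    refine le_of_mul_le_mul_left ?_ hi
    linarith
  have hone : Adm (fun _ : SS n => (1:ℝ)) := Adm.of_cont continuous_const fun _ => one_pos
  obtain ⟨u₁, hu₁, -⟩ := key _ hone
  obtain ⟨u, hu, hmin⟩ := (UU_compact E.hl c).exists_isMinOn ⟨u₁, hu₁⟩ (RT_cont E hc)
  have hadm : Adm fun ω => u ω ^ (q - 1) :=
    Adm.of_cont (u.continuous.rpow_const fun ω => Or.inl (hc.trans_le (hu.1 ω).1).ne')
      fun ω => Real.rpow_pos_of_pos (hc.trans_le (hu.1 ω).1) _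
  refine ⟨RT n lam p q u, _, hadm, ?_, fun F hF => ?_⟩
  · rw [RT, div_mul_cancel₀ _ (hadm.np_pos E).ne']
  · obtain ⟨w, hw, h1⟩ := key F hF
    exact le_trans (mul_le_mul_of_nonneg_right (hmin hw) (hF.np_pos E).le) h1

end minimizer


/-- polarized value -/
noncomputable def pv (t a b : ℝ) : ℝ := if 0 ≤ t then max a b else min a b

lemma pv_pos {t : ℝ} (h : 0 < t) (a b : ℝ) : pv t a b = max a b := if_pos h.le
lemma pv_neg {t : ℝ} (h : t < 0) (a b : ℝ) : pv t a b = min a b := if_neg (not_le.2 h)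
lemma pv_self (t a : ℝ) : pv t a a = a := by unfold pv; split_ifs <;> simp

lemma maxmin_alg (a a' b b' d : ℝ) (hd : 0 < d) :
    (a * b + a' * b') * d ≤ (max a a' * max b b' + min a a' * min b b') * d ∧
    ((a * b + a' * b') * d = (max a a' * max b b' + min a a' * min b b') * d →
      0 ≤ (a - a') * (b - b')) ∧
    (max a a' * min b b' + min a a' * max b b') * d ≤ (a * b + a' * b') * d ∧
    ((a * b + a' * b') * d = (max a a' * min b b' + min a a' * max b b') * d →
      (a - a') * (b - b') ≤ 0) := by
  rw [mul_left_inj' hd.ne', mul_left_inj' hd.ne', mul_le_mul_iff_left₀ hd, mul_le_mul_iff_left₀ hd]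
  rcases le_total a a' with h1 | h1 <;> rcases le_total b b' with h2 | h2 <;>
    simp only [h1, h2, max_eq_left, max_eq_right, min_eq_left, min_eq_right] <;>
    refine ⟨?_, fun h => ?_, ?_, fun h => ?_⟩ <;> nlinarith

lemma pol_alg (a a' b b' t τ K K' : ℝ) (ht : t = 0 → a = a') (hτ : τ = 0 → b = b')
    (h1 : 0 < t * τ → K < K') (h2 : t * τ < 0 → K' < K) (h0 : t * τ = 0 → K = K') :
    (pv t a a' * pv τ b b' + pv (-t) a' a * pv (-τ) b' b) * K +
      (pv (-t) a' a * pv τ b b' + pv t a a' * pv (-τ) b' b) * K' ≤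
      (a * b + a' * b') * K + (a' * b + a * b') * K' ∧
    ((pv t a a' * pv τ b b' + pv (-t) a' a * pv (-τ) b' b) * K +
      (pv (-t) a' a * pv τ b b' + pv t a a' * pv (-τ) b' b) * K' =
      (a * b + a' * b') * K + (a' * b + a * b') * K' → 0 ≤ (a - a') * (b - b') * (t * τ)) := by
  have eA := max_add_min a a'
  have eB := max_add_min b b'
  rcases lt_trichotomy t 0 with h | h | h <;> rcases lt_trichotomy τ 0 with h' | h' | h'
  · have hp := mul_pos_of_neg_of_neg h h'
    rw [pv_neg h, pv_neg h', pv_pos (by linarith), pv_pos (by linarith), max_comm a', max_comm b']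
    obtain ⟨k1, k2, k3, k4⟩ := maxmin_alg a a' b b' (K' - K) (by linarith [h1 hp])
    have e : (max a a' + min a a') * (max b b' + min b b') = (a + a') * (b + b') := by rw [eA, eB]
    exact ⟨by linear_combination k1 + K' * e, fun hh => mul_nonneg (k2 (by linear_combination hh - K' * e)) hp.le⟩
  · obtain rfl := hτ h'; subst h'
    obtain rfl := h0 (by ring)
    rw [pv_self, pv_self, pv_neg h, pv_pos (by linarith), max_comm a']
    refine ⟨le_of_eq ?_, fun _ => by simp⟩
    linear_combination 2 * b * K * eA
  · have hp := mul_neg_of_neg_of_pos h h'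
    rw [pv_neg h, pv_pos h', pv_pos (by linarith), pv_neg (by linarith), max_comm a', min_comm b']
    obtain ⟨k1, k2, k3, k4⟩ := maxmin_alg a a' b b' (K - K') (by linarith [h2 hp])
    have e : (max a a' + min a a') * (max b b' + min b b') = (a + a') * (b + b') := by rw [eA, eB]
    exact ⟨by linear_combination k3 + K' * e,
      fun hh => mul_nonneg_of_nonpos_of_nonpos (k4 (by linear_combination -hh + K' * e)) hp.le⟩
  · obtain rfl := ht h; subst h
    obtain rfl := h0 (by ring)
    rw [pv_self, pv_self, pv_neg h', pv_pos (by linarith), max_comm b']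
    refine ⟨le_of_eq ?_, fun _ => by simp⟩
    linear_combination 2 * a * K * eB
  · obtain rfl := ht h; obtain rfl := hτ h'; subst h
    obtain rfl := h0 (by ring)
    simp only [pv_self]
    exact ⟨le_refl _, fun _ => by simp⟩
  · obtain rfl := ht h; subst h
    obtain rfl := h0 (by ring)
    rw [pv_self, pv_self, pv_pos h', pv_neg (by linarith), min_comm b']
    refine ⟨le_of_eq ?_, fun _ => by simp⟩
    linear_combination 2 * a * K * eB
  · have hp := mul_neg_of_pos_of_neg h h'
    rw [pv_pos h, pv_neg h', pv_neg (by linarith), pv_pos (by linarith), min_comm a', max_comm b']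
    obtain ⟨k1, k2, k3, k4⟩ := maxmin_alg a a' b b' (K - K') (by linarith [h2 hp])
    have e : (max a a' + min a a') * (max b b' + min b b') = (a + a') * (b + b') := by rw [eA, eB]
    exact ⟨by linear_combination k3 + K' * e,
      fun hh => mul_nonneg_of_nonpos_of_nonpos (k4 (by linear_combination -hh + K' * e)) hp.le⟩
  · obtain rfl := hτ h'; subst h'
    obtain rfl := h0 (by ring)
    rw [pv_self, pv_self, pv_pos h, pv_neg (by linarith), min_comm a']
    refine ⟨le_of_eq ?_, fun _ => by simp⟩
    linear_combination 2 * b * K * eA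
  · have hp := mul_pos h h'
    rw [pv_pos h, pv_pos h', pv_neg (by linarith), pv_neg (by linarith), min_comm a', min_comm b']
    obtain ⟨k1, k2, k3, k4⟩ := maxmin_alg a a' b b' (K' - K) (by linarith [h1 hp])
    have e : (max a a' + min a a') * (max b b' + min b b') = (a + a') * (b + b') := by rw [eA, eB]
    exact ⟨by linear_combination k1 + K' * e, fun hh => mul_nonneg (k2 (by linear_combination hh - K' * e)) hp.le⟩

section polarization
variable {n : ℕ} {lam p q : ℝ}

/-- Reflection across the hyperplane orthogonal to `e`. -/
noncomputable def rfl' (e : EE n) : SS n → SS n := isoS (Submodule.reflection (Submodule.span ℝ {e})ᗮ)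

lemma rf_val (e : EE n) (ξ : SS n) : (rfl' e ξ).1 = ξ.1 - (2 * (⟪e, ξ.1⟫ / ‖e‖ ^ 2)) • e := by
  change Submodule.reflection (Submodule.span ℝ {e})ᗮ ξ.1 = _
  rw [Submodule.reflection_orthogonal_apply, Submodule.reflection_singleton_apply]
  simp [two_smul, two_mul, add_smul]

lemma rf_rf (e : EE n) (ξ : SS n) : rfl' e (rfl' e ξ) = ξ := by
  refine Subtype.ext ?_
  simp [rfl', isoS]

lemma rf_cont (e : EE n) : Continuous (rfl' e) := isoS_cont _

lemma rf_mp (e : EE n) : MeasurePreserving (rfl' e) (sphereMeasure n) (sphereMeasure n) := isoS_mp _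

lemma rf_inj (e : EE n) : Function.Injective (rfl' e) :=
  Function.LeftInverse.injective (rf_rf e)

lemma rf_emb (e : EE n) : MeasurableEmbedding (rfl' e) :=
  (rf_cont e).measurableEmbedding (rf_inj e)

lemma rf_inner (e : EE n) (he : e ≠ 0) (ξ : SS n) : ⟪(rfl' e ξ).1, e⟫ = -⟪ξ.1, e⟫ := by
  rw [rf_val, inner_sub_left, real_inner_smul_left, real_inner_self_eq_norm_sq, real_inner_comm e]
  have : ‖e‖ ≠ 0 := norm_ne_zero_iff.2 he
  field_simp; ring

lemma rf_fix (e : EE n) (ξ : SS n) (h : ⟪ξ.1, e⟫ = 0) : rfl' e ξ = ξ := by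
  refine Subtype.ext ?_
  rw [rf_val, real_inner_comm, h]; simp

lemma rf_dist (e : EE n) (ξ η : SS n) : dist (rfl' e ξ).1 (rfl' e η).1 = dist ξ.1 η.1 := by
  simp [rfl', isoS]

lemma rf_dist' (e : EE n) (ξ η : SS n) : dist (rfl' e ξ).1 η.1 = dist ξ.1 (rfl' e η).1 := by
  rw [← rf_dist e, rf_rf]

lemma rf_dist_sq (e : EE n) (ξ η : SS n) :
    dist ξ.1 (rfl' e η).1 ^ 2 = dist ξ.1 η.1 ^ 2 + 4 / ‖e‖ ^ 2 * (⟪ξ.1, e⟫ * ⟪η.1, e⟫) := by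
  rw [dist_sq_S, dist_sq_S, rf_val, inner_sub_right, real_inner_smul_right, real_inner_comm η.1 e]
  ring

lemma rf_kern (hl : 0 < lam) (e : EE n) (he : e ≠ 0) (ξ η : SS n) :
    (0 < ⟪ξ.1, e⟫ * ⟪η.1, e⟫ → dist ξ.1 η.1 ^ lam < dist ξ.1 (rfl' e η).1 ^ lam) ∧
    (⟪ξ.1, e⟫ * ⟪η.1, e⟫ < 0 → dist ξ.1 (rfl' e η).1 ^ lam < dist ξ.1 η.1 ^ lam) ∧
    (⟪ξ.1, e⟫ * ⟪η.1, e⟫ = 0 → dist ξ.1 η.1 ^ lam = dist ξ.1 (rfl' e η).1 ^ lam) := by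
  have h := rf_dist_sq e ξ η
  have he' : 0 < 4 / ‖e‖ ^ 2 := by have := norm_pos_iff.2 he; positivity
  refine ⟨fun h1 => ?_, fun h1 => ?_, fun h1 => ?_⟩
  · refine Real.rpow_lt_rpow dist_nonneg (lt_of_pow_lt_pow_left₀ 2 dist_nonneg ?_) hl
    nlinarith [mul_pos he' h1]
  · refine Real.rpow_lt_rpow dist_nonneg (lt_of_pow_lt_pow_left₀ 2 dist_nonneg ?_) hl
    nlinarith [mul_pos he' (neg_pos.2 h1)]
  · rw [h1, mul_zero, add_zero] at h
    rw [(sq_eq_sq₀ dist_nonneg dist_nonneg).1 h]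

/-- Polarization. -/
noncomputable def pol (e : EE n) (F : SS n → ℝ) (ξ : SS n) : ℝ := pv ⟪ξ.1, e⟫ (F ξ) (F (rfl' e ξ))

lemma pol_rf (e : EE n) (he : e ≠ 0) (F : SS n → ℝ) (ξ : SS n) :
    pol e F (rfl' e ξ) = pv (-⟪ξ.1, e⟫) (F (rfl' e ξ)) (F ξ) := by
  rw [pol, rf_inner e he, rf_rf]

lemma pol_adm (e : EE n) {F : SS n → ℝ} (hF : Continuous F) (h0 : ∀ ω, 0 < F ω) : Adm (pol e F) := by
  have hFs : Continuous fun ω => F (rfl' e ω) := hF.comp (rf_cont e)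
  have hin : Continuous fun ξ : SS n => ⟪ξ.1, e⟫ := continuous_subtype_val.inner continuous_const
  have hm : Measurable (pol e F) := by
    unfold pol pv
    refine Measurable.ite (measurableSet_le measurable_const hin.measurable) ?_ ?_
    · exact (hF.max hFs).measurable
    · exact (hF.min hFs).measurable
  have hpos : ∀ ω, 0 < pol e F ω := fun ω => by
    unfold pol pv
    split_ifs
    · exact lt_max_of_lt_left (h0 ω)
    · exact lt_min (h0 ω) (h0 _)
  refine ⟨?_, fun ω => (hpos ω).le, fun h => ?_⟩
  · refine ((cont_int hF).add (cont_int hFs)).mono' hm.aestronglyMeasurable (.of_forall fun ω => ?_)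
    rw [Real.norm_of_nonneg (hpos ω).le]
    have h1 := h0 ω
    have h2 := h0 (rfl' e ω)
    simp only [Pi.add_apply]
    unfold pol pv
    split_ifs
    · exact max_le (by linarith) (by linarith)
    · exact (min_le_left _ _).trans (by linarith)
  · have : ∀ᵐ ω ∂(sphereMeasure n), False := by
      filter_upwards [h] with ω hω
      exact (hpos ω).ne' hω
    rw [Filter.eventually_false_iff_eq_bot, ae_eq_bot] at this
    exact sphereMeasure_ne this

lemma rf_integral (e : EE n) (f : SS n → ℝ) :
    ∫ ω, f (rfl' e ω) ∂(sphereMeasure n) = ∫ ω, f ω ∂(sphereMeasure n) :=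
  (rf_mp e).integral_comp (rf_emb e) f

lemma rf_int (e : EE n) {f : SS n → ℝ} (hf : Integrable f (sphereMeasure n)) :
    Integrable (fun ω => f (rfl' e ω)) (sphereMeasure n) :=
  (rf_mp e).integrable_comp_of_integrable hf

lemma pol_np (E : Expo n lam p q) (e : EE n) (he : e ≠ 0) {F : SS n → ℝ} (hF : Continuous F)
    (h0 : ∀ ω, 0 < F ω) : np p (pol e F) = np p F := by
  have hA := Adm.of_cont hF h0
  have h1 : ∀ G : SS n → ℝ, Adm G → ∫ ω, (G ω ^ p + G (rfl' e ω) ^ p) ∂(sphereMeasure n) =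
      2 * ∫ ω, G ω ^ p ∂(sphereMeasure n) := fun G hG => by
    rw [integral_add (hG.pint E) (rf_int e (hG.pint E)), rf_integral e (fun ω => G ω ^ p)]; ring
  have h2 : ∀ ω, pol e F ω ^ p + pol e F (rfl' e ω) ^ p = F ω ^ p + F (rfl' e ω) ^ p := by
    intro ω
    rw [pol_rf e he, pol]
    rcases lt_trichotomy ⟪ω.1, e⟫ 0 with h | h | h
    · rw [pv_neg h, pv_pos (by linarith)]
      rcases le_total (F ω) (F (rfl' e ω)) with h' | h'
      · rw [min_eq_left h', max_eq_left h']
      · rw [min_eq_right h', max_eq_right h', add_comm]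
    · rw [rf_fix e ω h, pv_self, pv_self]
    · rw [pv_pos h, pv_neg (by linarith)]
      rcases le_total (F ω) (F (rfl' e ω)) with h' | h'
      · rw [max_eq_right h', min_eq_right h', add_comm]
      · rw [max_eq_left h', min_eq_left h']
  have h3 := h1 _ hA
  rw [← integral_congr_ae (.of_forall h2), h1 _ (pol_adm e hF h0)] at h3
  unfold np
  congr 1
  linarith

/-- Symmetrized integrand. -/
noncomputable def SI (lam : ℝ) (e : EE n) (F G : SS n → ℝ) (z : SS n × SS n) : ℝ :=
  (F z.1 * G z.2 + F (rfl' e z.1) * G (rfl' e z.2)) * dist z.1.1 z.2.1 ^ lam +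
  (F (rfl' e z.1) * G z.2 + F z.1 * G (rfl' e z.2)) * dist z.1.1 (rfl' e z.2).1 ^ lam

lemma SI_int (hl : 0 < lam) (e : EE n) {F G : SS n → ℝ} (hF : Integrable F (sphereMeasure n))
    (hG : Integrable G (sphereMeasure n)) :
    Integrable (SI lam e F G) ((sphereMeasure n).prod (sphereMeasure n)) ∧
    ∫ z, SI lam e F G z ∂((sphereMeasure n).prod (sphereMeasure n)) =
      4 * ∫ ω, F ω * pot lam G ω ∂(sphereMeasure n) := by
  set μ := sphereMeasure n
  have hFs := rf_int e hF
  have hGs := rf_int e hG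
  have hpot : ∀ ω, pot lam (fun ω => G (rfl' e ω)) ω = pot lam G (rfl' e ω) := fun ω =>
    pot_isoS _ G ω
  have i1 := prod_int hl hF hG
  have i2 := prod_int hl hFs hGs
  have e1 := prod_eq hl hF hG
  have e2 := prod_eq hl hFs hGs
  have hm : MeasurePreserving (Prod.map id (rfl' e)) (μ.prod μ) (μ.prod μ) :=
    (MeasurePreserving.id μ).prod (rf_mp e)
  have hemb : MeasurableEmbedding (Prod.map id (rfl' e) : SS n × SS n → SS n × SS n) :=
    MeasurableEmbedding.id.prodMap (rf_emb e)
  have j3 := hm.integrable_comp_of_integrable i2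
  have j4 := hm.integrable_comp_of_integrable i1
  have k3 := hm.integral_comp hemb fun z : SS n × SS n =>
    F (rfl' e z.1) * G (rfl' e z.2) * dist z.1.1 z.2.1 ^ lam
  have k4 := hm.integral_comp hemb fun z : SS n × SS n => F z.1 * G z.2 * dist z.1.1 z.2.1 ^ lam
  have e2' : ∫ ω, F (rfl' e ω) * pot lam (fun ω => G (rfl' e ω)) ω ∂μ = ∫ ω, F ω * pot lam G ω ∂μ := by
    simp only [hpot]
    exact rf_integral e fun ω => F ω * pot lam G ω
  rw [e2'] at e2
  rw [e2] at k3
  rw [e1] at k4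
  have hS : SI lam e F G = fun z =>
      (F z.1 * G z.2 * dist z.1.1 z.2.1 ^ lam +
        F (rfl' e z.1) * G (rfl' e z.2) * dist z.1.1 z.2.1 ^ lam) +
      (((fun z : SS n × SS n => F (rfl' e z.1) * G (rfl' e z.2) * dist z.1.1 z.2.1 ^ lam) ∘
        (Prod.map id (rfl' e))) z +
      ((fun z : SS n × SS n => F z.1 * G z.2 * dist z.1.1 z.2.1 ^ lam) ∘
        (Prod.map id (rfl' e))) z) := by
    funext z
    simp only [SI, Function.comp, Prod.map_fst, Prod.map_snd, id, rf_rf]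
    ring
  rw [hS]
  refine ⟨(i1.add i2).add (j3.add j4), ?_⟩
  refine (integral_add (i1.add i2) (j3.add j4)).trans ?_
  refine (congrArg₂ (· + ·) (integral_add i1 i2) (integral_add j3 j4)).trans ?_
  refine (congrArg₂ (· + ·) (congrArg₂ (· + ·) e1 e2) (congrArg₂ (· + ·) k3 k4)).trans ?_
  ring

lemma pol_SI (hl : 0 < lam) (e : EE n) (he : e ≠ 0) (F G : SS n → ℝ) (z : SS n × SS n) :
    SI lam e (pol e F) (pol e G) z ≤ SI lam e F G z ∧
    (SI lam e (pol e F) (pol e G) z = SI lam e F G z →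
      0 ≤ ((F z.1 - F (rfl' e z.1)) * ⟪z.1.1, e⟫) * ((G z.2 - G (rfl' e z.2)) * ⟪z.2.1, e⟫)) := by
  obtain ⟨h1, h2, h3⟩ := rf_kern hl e he z.1 z.2
  have := pol_alg (F z.1) (F (rfl' e z.1)) (G z.2) (G (rfl' e z.2)) ⟪z.1.1, e⟫ ⟪z.2.1, e⟫
    (dist z.1.1 z.2.1 ^ lam) (dist z.1.1 (rfl' e z.2).1 ^ lam)
    (fun h => by rw [rf_fix e _ h]) (fun h => by rw [rf_fix e _ h]) h1 h2 h3
  simp only [SI, pol_rf e he]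
  refine ⟨this.1, fun h => (this.2 h).trans_eq (by ring)⟩

lemma pol_rigid (E : Expo n lam p q) {m : ℝ} (hm0 : 0 ≤ m)
    (hm : ∀ F : SS n → ℝ, Adm F → m * np p F ≤ nq lam q F)
    {F G : SS n → ℝ} (hF : Continuous F) (hF0 : ∀ ω, 0 < F ω) (hG : Continuous G)
    (hG0 : ∀ ω, 0 < G ω) (hB : SBalanced lam F)
    (heq : ∫ ω, F ω * pot lam G ω ∂(sphereMeasure n) = m * np p F * np p G) (e : EE n) (he : e ≠ 0) :
    (∀ ω, F (rfl' e ω) = F ω) ∨ (∀ ω, G (rfl' e ω) = G ω) := by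
  set μ := sphereMeasure n with hμ
  have aF := Adm.of_cont hF hF0
  have aG := Adm.of_cont hG hG0
  have pF := pol_adm e hF hF0
  have pG := pol_adm e hG hG0
  have hge : m * np p F * np p G ≤ ∫ ω, pol e F ω * pot lam (pol e G) ω ∂μ := by
    refine le_trans ?_ (holder_pair E pF pG).1
    rw [pol_np E e he hF hF0]
    have h1 := hm _ pG
    rw [pol_np E e he hG hG0] at h1
    have := mul_le_mul_of_nonneg_left h1 (aF.np_pos E).le
    linarith
  obtain ⟨s1, s2⟩ := SI_int E.hl e aF.int aG.int
  obtain ⟨s3, s4⟩ := SI_int E.hl e pF.int pG.int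
  have hD0 : ∀ z, 0 ≤ SI lam e F G z - SI lam e (pol e F) (pol e G) z := fun z =>
    sub_nonneg.2 (pol_SI E.hl e he F G z).1
  have hDi : Integrable (fun z => SI lam e F G z - SI lam e (pol e F) (pol e G) z) (μ.prod μ) :=
    s1.sub s3
  have hz : ∫ z, (SI lam e F G z - SI lam e (pol e F) (pol e G) z) ∂(μ.prod μ) = 0 := by
    refine le_antisymm ?_ (integral_nonneg hD0)
    rw [integral_sub s1 s3, s2, s4, heq]; linarith
  have hae := (integral_eq_zero_iff_of_nonneg hD0 hDi).1 hz
  have hin : Continuous fun ξ : SS n => ⟪ξ.1, e⟫ := continuous_subtype_val.inner continuous_const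
  set φ : SS n → ℝ := fun ξ => (F ξ - F (rfl' e ξ)) * ⟪ξ.1, e⟫ with hφ
  set ψ : SS n → ℝ := fun ξ => (G ξ - G (rfl' e ξ)) * ⟪ξ.1, e⟫ with hψ
  have cφ : Continuous φ := (hF.sub (hF.comp (rf_cont e))).mul hin
  have cψ : Continuous ψ := (hG.sub (hG.comp (rf_cont e))).mul hin
  have hnn : ∀ᵐ z ∂(μ.prod μ), 0 ≤ φ z.1 * ψ z.2 := by
    filter_upwards [hae] with z hz
    exact (pol_SI E.hl e he F G z).2 (sub_eq_zero.1 hz).symm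
  have hφ0 : ∫ ξ, φ ξ ∂μ = 0 := by
    have h1 := balanced_centered E.hl aF.int hB e
    have c1 : Continuous fun ω : SS n => F ω * ⟪ω.1, e⟫ := hF.mul hin
    have h2 := rf_integral e fun ω : SS n => F ω * ⟪ω.1, e⟫
    have e1 : ∀ ω, φ ω = F ω * ⟪ω.1, e⟫ + F (rfl' e ω) * ⟪(rfl' e ω).1, e⟫ := fun ω => by
      rw [rf_inner e he]; simp only [hφ]; ring
    rw [integral_congr_ae (.of_forall e1), integral_add (cont_int c1) (rf_int e (cont_int c1)), h2, h1]
    simp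
  have hz0 : ∫ z, |φ z.1| * |ψ z.2| ∂(μ.prod μ) = 0 := by
    have e1 : ∫ z, |φ z.1| * |ψ z.2| ∂(μ.prod μ) = ∫ z, φ z.1 * ψ z.2 ∂(μ.prod μ) := by
      refine integral_congr_ae ?_
      filter_upwards [hnn] with z hz
      rw [← abs_mul, abs_of_nonneg hz]
    rw [e1, integral_prod_mul φ ψ, hφ0, zero_mul]
  rw [integral_prod_mul (fun x => |φ x|) (fun x => |ψ x|)] at hz0
  have fin : ∀ {H : SS n → ℝ}, Continuous H →
      ∫ ξ, |(H ξ - H (rfl' e ξ)) * ⟪ξ.1, e⟫| ∂μ = 0 → ∀ ω, H (rfl' e ω) = H ω := by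
    intro H cH h ω
    have cχ : Continuous fun ξ : SS n => (H ξ - H (rfl' e ξ)) * ⟪ξ.1, e⟫ :=
      (cH.sub (cH.comp (rf_cont e))).mul hin
    have h1 := (integral_eq_zero_iff_of_nonneg (fun ξ => abs_nonneg _) (cont_int cχ.abs)).1 h
    have h2 := (Continuous.ae_eq_iff_eq μ cχ.abs continuous_zero).1 h1
    have h3 := congrFun h2 ω
    simp only [Pi.zero_apply, abs_eq_zero, mul_eq_zero] at h3
    rcases h3 with h3 | h3
    · linarith
    · rw [rf_fix e ω h3]
  rcases mul_eq_zero.1 hz0 with h | h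
  · exact Or.inl (fin hF h)
  · exact Or.inr (fin hG h)

lemma np_congr {F G : SS n → ℝ} (h : F =ᵐ[sphereMeasure n] G) : np p F = np p G := by
  unfold np; congr 1
  exact integral_congr_ae (by filter_upwards [h] with ω hω; rw [hω])

lemma nq_congr {F G : SS n → ℝ} (h : F =ᵐ[sphereMeasure n] G) : nq lam q F = nq lam q G := by
  unfold nq; simp only [pot_congr h]

/-- Balanced minimizers are constant. -/
lemma min_const (E : Expo n lam p q) {m : ℝ} (hm0 : 0 ≤ m)
    (hm : ∀ F : SS n → ℝ, Adm F → m * np p F ≤ nq lam q F)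
    {F : SS n → ℝ} (hF : Adm F) (hB : SBalanced lam F) (heq : nq lam q F = m * np p F) :
    ∃ a : ℝ, 0 < a ∧ ∀ᵐ ω ∂(sphereMeasure n), F ω = a := by
  set G : SS n → ℝ := fun ω => pot lam F ω ^ (q - 1) with hG
  have aG : Adm G := hF.next E
  have h1 := holder_pair E hF aG
  have h2 : ∫ ω, F ω * pot lam G ω ∂(sphereMeasure n) = nq lam q F * np p G := improve E hF
  have h3 := mul_le_mul_of_nonneg_left (hm G aG) (hF.np_pos E).le
  obtain ⟨c, hc, hFc⟩ := h1.2 (le_antisymm h1.1 (by rw [h2, heq]; linarith))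
  set F1 : SS n → ℝ := fun ω => c * pot lam G ω ^ (q - 1) with hF1
  have cF1 : Continuous F1 := continuous_const.mul (aG.potq_cont E _)
  have pF1 : ∀ ω, 0 < F1 ω := fun ω => mul_pos hc (Real.rpow_pos_of_pos (aG.pot_pos E ω) _)
  have hae : F =ᵐ[sphereMeasure n] F1 := hFc
  have cG : Continuous G := hF.potq_cont E _
  have pG : ∀ ω, 0 < G ω := fun ω => Real.rpow_pos_of_pos (hF.pot_pos E ω) _
  have hB1 : SBalanced lam F1 := by
    intro w
    have := hB w
    rw [integral_congr_ae hae] at this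
    refine this.trans_eq (integral_congr_ae ?_)
    filter_upwards [hae] with ω hω; rw [hω]
  have hpair : ∫ ω, F1 ω * pot lam G ω ∂(sphereMeasure n) = m * np p F1 * np p G := by
    rw [← np_congr hae, ← heq, ← h2]
    refine integral_congr_ae ?_
    filter_upwards [hae] with ω hω; rw [hω]
  have hsym : ∀ e : EE n, e ≠ 0 → ∀ ω, F1 (rfl' e ω) = F1 ω := by
    intro e he
    rcases pol_rigid E hm0 hm cF1 pF1 cG pG hB1 hpair e he with h | h
    · exact h
    · intro ω
      simp only [hF1]
      have := pot_isoS (lam := lam) (Submodule.reflection (Submodule.span ℝ {e})ᗮ) G ω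
      change pot lam (fun ω => G (rfl' e ω)) ω = pot lam G (rfl' e ω) at this
      rw [← this, funext h]
  have hconst : ∀ ξ η, F1 ξ = F1 η := by
    intro ξ η
    by_cases h : ξ = η
    · rw [h]
    have he : ξ.1 - η.1 ≠ 0 := sub_ne_zero.2 fun h' => h (Subtype.ext h')
    have : rfl' (ξ.1 - η.1) ξ = η :=
      Subtype.ext (Submodule.reflection_sub (by rw [SS.norm_eq, SS.norm_eq]))
    rw [← hsym _ he ξ, this]
  obtain ⟨ξ⟩ := sphere_ne (n := n)
  refine ⟨F1 ξ, pF1 ξ, ?_⟩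
  filter_upwards [hae] with ω hω
  rw [hω, hconst ω ξ]

lemma adm_one : Adm (fun _ : SS n => (1:ℝ)) := Adm.of_cont continuous_const fun _ => one_pos

/-- The sharp characterization with abstract constant. -/
theorem sharp_abstract (E : Expo n lam p q) {F : SS n → ℝ} (hF : Adm F) :
    nq lam q F = nq lam q (fun _ : SS n => (1:ℝ)) / np p (fun _ : SS n => (1:ℝ)) * np p F ↔
    ∃ (a : ℝ) (v : EE n), 0 < a ∧
      ∀ᵐ ω ∂(sphereMeasure n), F ω = a * kf v ω ^ (-((n:ℝ) + lam / 2)) := by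
  obtain ⟨m, G, aG, hGm, hm⟩ := exists_minimizer E
  have hm0 : 0 ≤ m := by
    have h1 := aG.np_pos E
    have h2 := aG.nq_pos E
    rw [hGm] at h2
    exact (pos_of_mul_pos_left h2 h1.le).le
  have main : ∀ H : SS n → ℝ, Adm H → nq lam q H = m * np p H → ∃ v : EE n, ∃ a : ℝ, 0 < a ∧
      ∀ᵐ ω ∂(sphereMeasure n), tr lam v H ω = a := by
    intro H aH hH
    obtain ⟨v, hv⟩ := exists_balanced E.hn E.hl aH.int aH.nonneg aH.ne
    refine ⟨v, min_const E hm0 hm (aH.tr v) hv ?_⟩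
    rw [nq_tr E aH, np_tr E aH, hH]
  have one := adm_one (n := n)
  have hm1 : nq lam q (fun _ : SS n => (1:ℝ)) / np p (fun _ : SS n => (1:ℝ)) = m := by
    obtain ⟨v, a, ha, h⟩ := main G aG hGm
    have h' : tr lam v G =ᵐ[sphereMeasure n] fun _ => a * 1 := by
      filter_upwards [h] with ω hω; rw [hω, mul_one]
    have e1 := nq_tr E aG v
    have e2 := np_tr E aG v
    rw [nq_congr h', nq_smul E one ha] at e1
    rw [np_congr h', np_smul E one ha] at e2
    rw [← e1, ← e2] at hGm
    rw [div_eq_iff (one.np_pos E).ne']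
    refine mul_left_cancel₀ ha.ne' ?_
    linarith
  rw [hm1]
  constructor
  · intro h
    obtain ⟨v, a, ha, h⟩ := main F hF h
    refine ⟨a, -v, ha, mob_ae v (fun ω => F ω = a * kf (-v) ω ^ (-((n:ℝ) + lam / 2))) ?_⟩
    filter_upwards [h] with ω hω
    have h1 := kf_mul_inv v ω
    have h2 := kf_pos v ω
    have h3 := kf_pos (-v) (mob v ω)
    rw [← hω]
    simp only [tr]
    rw [mul_assoc, ← Real.mul_rpow h2.le h3.le, h1, Real.one_rpow, mul_one]
  · rintro ⟨a, v, ha, h⟩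
    have h' : F =ᵐ[sphereMeasure n] fun ω => a * tr lam v (fun _ => (1:ℝ)) ω := by
      filter_upwards [h] with ω hω; rw [hω]; simp [tr]
    rw [nq_congr h', np_congr h', nq_smul E (one.tr v) ha, np_smul E (one.tr v) ha, nq_tr E one,
      np_tr E one, ← hm1]
    have := one.np_pos E
    field_simp
end polarization


section constant

lemma gamma_lint {a r : ℝ} (ha : 0 < a) (hr : 0 < r) :
    ∫⁻ w in Set.Ioi (0:ℝ), ENNReal.ofReal (w ^ (a - 1) * Real.exp (-(r * w))) =
      ENNReal.ofReal ((1 / r) ^ a * Real.Gamma a) := by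
  have h := Real.integral_rpow_mul_exp_neg_mul_Ioi ha hr
  have hi : Integrable (fun w : ℝ => w ^ (a - 1) * Real.exp (-(r * w)))
      (volume.restrict (Set.Ioi (0:ℝ))) := by
    by_contra hc
    rw [integral_undef hc] at h
    have := Real.Gamma_pos_of_pos ha
    have : 0 < (1 / r) ^ a * Real.Gamma a := by positivity
    linarith
  rw [← h, ofReal_integral_eq_lintegral_ofReal hi]
  filter_upwards [self_mem_ae_restrict measurableSet_Ioi] with w hw
  have : (0:ℝ) < w := hw
  simp only [Pi.zero_apply]
  positivity

lemma gauss_lint (n : ℕ) {b : ℝ} (hb : 0 < b) :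
    ∫⁻ y : EuclideanSpace ℝ (Fin n), ENNReal.ofReal (Real.exp (-b * ‖y‖ ^ 2)) =
      ENNReal.ofReal ((Real.pi / b) ^ ((n:ℝ) / 2)) := by
  have h := GaussianFourier.integral_rexp_neg_mul_sq_norm (V := EuclideanSpace ℝ (Fin n)) hb
  have hp := Real.pi_pos
  have hi : Integrable fun y : EuclideanSpace ℝ (Fin n) => Real.exp (-b * ‖y‖ ^ 2) := by
    by_contra hc
    rw [integral_undef hc] at h
    have : 0 < (Real.pi / b) ^ ((Module.finrank ℝ (EuclideanSpace ℝ (Fin n)) : ℝ) / 2) := by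
      positivity
    linarith
  rw [← ofReal_integral_eq_lintegral_ofReal hi (.of_forall fun _ => (Real.exp_pos _).le), h]
  simp

lemma split_lint (n : ℕ) (g : ℝ → ℝ → ℝ≥0∞) (hg : Measurable (Function.uncurry g)) :
    ∫⁻ x : EE n, g (x 0) ‖x‖ =
      ∫⁻ y : EuclideanSpace ℝ (Fin n), ∫⁻ t : ℝ, g t (Real.sqrt (t ^ 2 + ‖y‖ ^ 2)) := by
  have m1 := (EuclideanSpace.volume_preserving_symm_measurableEquiv_toLp (Fin (n+1)))
  have m2 := volume_preserving_piFinSuccAbove (fun _ : Fin (n + 1) => ℝ) 0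
  have m3 := (EuclideanSpace.volume_preserving_symm_measurableEquiv_toLp (Fin n))
  have hn1 : ∀ x : EE n, ‖x‖ = Real.sqrt (x 0 ^ 2 + ∑ i : Fin n, x i.succ ^ 2) := by
    intro x
    rw [EuclideanSpace.norm_eq, Fin.sum_univ_succ]; simp
  have hn2 : ∀ y : EuclideanSpace ℝ (Fin n), ‖y‖ ^ 2 = ∑ i : Fin n, y i ^ 2 := by
    intro y; rw [EuclideanSpace.norm_sq_eq]; simp
  have hmeas : Measurable fun z : ℝ × (Fin n → ℝ) => g z.1 (Real.sqrt (z.1 ^ 2 + ∑ i, z.2 i ^ 2)) :=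
    hg.comp (measurable_fst.prodMk (by fun_prop))
  calc ∫⁻ x : EE n, g (x 0) ‖x‖
      = ∫⁻ z : ℝ × (Fin n → ℝ), g z.1 (Real.sqrt (z.1 ^ 2 + ∑ i, z.2 i ^ 2)) := by
        rw [← (m2.comp m1).lintegral_comp hmeas]
        refine lintegral_congr fun x => ?_
        rw [hn1]
        rfl
    _ = ∫⁻ y : Fin n → ℝ, ∫⁻ t : ℝ, g t (Real.sqrt (t ^ 2 + ∑ i, y i ^ 2)) := by
        rw [Measure.volume_eq_prod, lintegral_prod_symm' _ hmeas]
    _ = _ := by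
        rw [← m3.lintegral_comp hmeas.lintegral_prod_left']
        refine lintegral_congr fun y => ?_
        rw [hn2]; rfl

lemma inner_cv {b s : ℝ} (hb : 0 < b) :
    ∫⁻ t : ℝ, ENNReal.ofReal ((Real.sqrt (t ^ 2 + b) - t) ^ s * Real.exp (-Real.sqrt (t ^ 2 + b)) /
        Real.sqrt (t ^ 2 + b)) =
      ∫⁻ w in Set.Ioi (0:ℝ), ENNReal.ofReal (w ^ (s - 1) * Real.exp (-(1 / 2 * w)) *
        Real.exp (-(1 / (2 * w)) * b)) := by
  have him : (fun w : ℝ => (b / w - w) / 2) '' Set.Ioi 0 = Set.univ := by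
    refine Set.eq_univ_of_forall fun t => ⟨Real.sqrt (t ^ 2 + b) - t, ?_, ?_⟩
    · have : t < Real.sqrt (t ^ 2 + b) := Real.lt_sqrt_of_sq_lt (by linarith)
      exact sub_pos.2 this
    · have h1 : t < Real.sqrt (t ^ 2 + b) := Real.lt_sqrt_of_sq_lt (by linarith)
      have h2 : Real.sqrt (t ^ 2 + b) ^ 2 = t ^ 2 + b := Real.sq_sqrt (by positivity)
      have h3 : Real.sqrt (t ^ 2 + b) - t ≠ 0 := (sub_pos.2 h1).ne'
      simp only
      have h4 : b / (Real.sqrt (t ^ 2 + b) - t) = Real.sqrt (t ^ 2 + b) + t := by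
        rw [div_eq_iff h3]; linarith
      rw [h4]; ring
  have hd : ∀ w ∈ Set.Ioi (0:ℝ), HasDerivWithinAt (fun w : ℝ => (b / w - w) / 2)
      (-(b / w ^ 2 + 1) / 2) (Set.Ioi 0) w := by
    intro w hw
    have hw0 : w ≠ 0 := (Set.mem_Ioi.1 hw).ne'
    have h := (((hasDerivAt_inv hw0).const_mul b).sub (hasDerivAt_id w)).div_const 2
    refine HasDerivAt.hasDerivWithinAt ?_
    convert! h using 1
    field_simp
    ring
  have hinj : Set.InjOn (fun w : ℝ => (b / w - w) / 2) (Set.Ioi 0) := by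
    have : StrictAntiOn (fun w : ℝ => (b / w - w) / 2) (Set.Ioi 0) := by
      intro x hx y hy hxy
      have h1 : b / y < b / x := div_lt_div_of_pos_left hb hx hxy
      simp only
      linarith
    exact this.injOn
  have := lintegral_image_eq_lintegral_abs_deriv_mul measurableSet_Ioi hd hinj
    (fun t => ENNReal.ofReal ((Real.sqrt (t ^ 2 + b) - t) ^ s * Real.exp (-Real.sqrt (t ^ 2 + b)) /
        Real.sqrt (t ^ 2 + b)))
  rw [him, setLIntegral_univ] at this
  rw [this]
  refine setLIntegral_congr_fun measurableSet_Ioi fun w hw => ?_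
  have hw0 : (0:ℝ) < w := hw
  have e1 : Real.sqrt (((b / w - w) / 2) ^ 2 + b) = (b / w + w) / 2 := by
    rw [Real.sqrt_eq_iff_mul_self_eq (by positivity) (by positivity)]
    field_simp; ring
  have e2 : (b / w + w) / 2 - (b / w - w) / 2 = w := by ring
  have e3 : |-(b / w ^ 2 + 1) / 2| = (b / w ^ 2 + 1) / 2 := by
    rw [neg_div, abs_neg, abs_of_pos (by positivity)]
  rw [e1, e2, e3, ← ENNReal.ofReal_mul (by positivity), mul_assoc, ← Real.exp_add]
  have e4 : -(1 / 2 * w) + -(1 / (2 * w)) * b = -((b / w + w) / 2) := by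
    field_simp; ring
  rw [e4, Real.rpow_sub_one hw0.ne']
  congr 1
  field_simp

lemma full_lint {n : ℕ} (hn : 1 ≤ n) {s : ℝ} (hs : 0 < s) :
    ∫⁻ x : EE n, ENNReal.ofReal ((‖x‖ - x 0) ^ s * Real.exp (-‖x‖) / ‖x‖) =
      ENNReal.ofReal ((2 * Real.pi) ^ ((n:ℝ) / 2) * (2 ^ (s + (n:ℝ) / 2) * Real.Gamma (s + (n:ℝ) / 2))) := by
  have hp := Real.pi_pos
  rw [split_lint n (fun t r => ENNReal.ofReal ((r - t) ^ s * Real.exp (-r) / r)) (by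
    unfold Function.uncurry; fun_prop)]
  have : Nonempty (Fin n) := ⟨⟨0, hn⟩⟩
  have h0 : ∀ᵐ y : EuclideanSpace ℝ (Fin n), y ≠ 0 := by
    have := measure_singleton (μ := (volume : Measure (EuclideanSpace ℝ (Fin n)))) 0
    exact compl_mem_ae_iff.2 this
  have h1 : ∀ᵐ y : EuclideanSpace ℝ (Fin n), ∫⁻ t : ℝ,
      ENNReal.ofReal ((Real.sqrt (t ^ 2 + ‖y‖ ^ 2) - t) ^ s *
        Real.exp (-Real.sqrt (t ^ 2 + ‖y‖ ^ 2)) / Real.sqrt (t ^ 2 + ‖y‖ ^ 2)) =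
      ∫⁻ w in Set.Ioi (0:ℝ), ENNReal.ofReal (w ^ (s - 1) * Real.exp (-(1 / 2 * w)) *
        Real.exp (-(1 / (2 * w)) * ‖y‖ ^ 2)) := by
    filter_upwards [h0] with y hy
    have := norm_pos_iff.2 hy
    exact inner_cv (by positivity)
  rw [lintegral_congr_ae h1, lintegral_lintegral_swap (by
    unfold Function.uncurry; fun_prop)]
  have h2 : ∀ w ∈ Set.Ioi (0:ℝ), ∫⁻ y : EuclideanSpace ℝ (Fin n),
      ENNReal.ofReal (w ^ (s - 1) * Real.exp (-(1 / 2 * w)) * Real.exp (-(1 / (2 * w)) * ‖y‖ ^ 2)) =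
      ENNReal.ofReal ((2 * Real.pi) ^ ((n:ℝ) / 2)) *
        ENNReal.ofReal (w ^ ((s + (n:ℝ) / 2) - 1) * Real.exp (-(1 / 2 * w))) := by
    intro w hw
    have hw0 : (0:ℝ) < w := hw
    have hc : 0 ≤ w ^ (s - 1) * Real.exp (-(1 / 2 * w)) := by positivity
    simp_rw [ENNReal.ofReal_mul hc]
    rw [lintegral_const_mul _ (by fun_prop), gauss_lint n (by positivity), ← ENNReal.ofReal_mul hc,
      ← ENNReal.ofReal_mul (by positivity)]
    congr 1
    have : Real.pi / (1 / (2 * w)) = (2 * Real.pi) * w := by field_simp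
    rw [this, Real.mul_rpow (by positivity) hw0.le,
      show s + (n:ℝ) / 2 - 1 = (s - 1) + (n:ℝ) / 2 by ring, Real.rpow_add hw0]
    ring
  rw [setLIntegral_congr_fun measurableSet_Ioi h2, lintegral_const_mul _ (by fun_prop),
    gamma_lint (by positivity) (by norm_num), ← ENNReal.ofReal_mul (by positivity)]
  norm_num

/-- north pole -/
noncomputable def north (n : ℕ) : SS n := ⟨EuclideanSpace.single 0 1, by simp⟩

lemma inner_north {n : ℕ} (x : EE n) : ⟪x, (north n).1⟫ = x 0 := by
  simp [north, EuclideanSpace.inner_single_right]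

lemma inner_le_S {n : ℕ} (ω ζ : SS n) : ⟪ω.1, ζ.1⟫ ≤ 1 := by
  have := real_inner_le_norm ω.1 ζ.1
  rwa [SS.norm_eq, SS.norm_eq, mul_one] at this

lemma sphere_int {n : ℕ} (hn : 1 ≤ n) {s : ℝ} (hs : 0 < s) :
    Real.Gamma (n + s) * ∫ ω : SS n, (1 - ω.1 0) ^ s ∂(sphereMeasure n) =
      (2 * Real.pi) ^ ((n:ℝ) / 2) * (2 ^ (s + (n:ℝ) / 2) * Real.Gamma (s + (n:ℝ) / 2)) := by
  have hp := Real.pi_pos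
  have hle : ∀ ω : SS n, 0 ≤ 1 - ω.1 0 := by
    intro ω; have := inner_le_S ω (north n); rw [inner_north] at this; linarith
  have hn0 : (0:ℝ) < n := by exact_mod_cast hn
  have G1 := Real.Gamma_pos_of_pos (show 0 < (n:ℝ) + s by positivity)
  have G2 := Real.Gamma_pos_of_pos (show 0 < s + (n:ℝ) / 2 by positivity)
  have h := full_lint hn hs
  rw [polar_lintegral _ (by fun_prop)] at h
  have h1 : ∀ ω : SS n, ∫⁻ r : Set.Ioi (0:ℝ), ENNReal.ofReal ((‖r.1 • ω.1‖ - (r.1 • ω.1) 0) ^ s *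
      Real.exp (-‖r.1 • ω.1‖) / ‖r.1 • ω.1‖) ∂(Measure.volumeIoiPow n) =
      ENNReal.ofReal (Real.Gamma (n + s) * (1 - ω.1 0) ^ s) := by
    intro ω
    have hpt : ∀ r : Set.Ioi (0:ℝ), ENNReal.ofReal (r.1 ^ n) *
        ENNReal.ofReal ((‖r.1 • ω.1‖ - (r.1 • ω.1) 0) ^ s *
        Real.exp (-‖r.1 • ω.1‖) / ‖r.1 • ω.1‖) =
        ENNReal.ofReal ((1 - ω.1 0) ^ s) *
          ENNReal.ofReal (r.1 ^ ((n + s : ℝ) - 1) * Real.exp (-(1 * r.1))) := by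
      intro r
      have hr : (0:ℝ) < r.1 := r.2
      have e1 : ‖r.1 • ω.1‖ = r.1 := by rw [norm_smul, SS.norm_eq, mul_one, Real.norm_of_nonneg hr.le]
      have e2 : r.1 - (r.1 • ω.1) 0 = r.1 * (1 - ω.1 0) := by simp; ring
      rw [e1, e2, Real.mul_rpow hr.le (hle ω), ← ENNReal.ofReal_mul (by positivity),
        ← ENNReal.ofReal_mul (Real.rpow_nonneg (hle ω) _), Real.rpow_sub_one hr.ne',
        Real.rpow_add hr, Real.rpow_natCast, one_mul]
      congr 1
      ring
    rw [Measure.volumeIoiPow, lintegral_withDensity_eq_lintegral_mul _ (by fun_prop) (by fun_prop)]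
    simp only [Pi.mul_apply]
    rw [lintegral_congr hpt, lintegral_const_mul _ (by fun_prop),
      lintegral_subtype_comap measurableSet_Ioi
        (fun r : ℝ => ENNReal.ofReal (r ^ ((n + s : ℝ) - 1) * Real.exp (-(1 * r)))),
      gamma_lint (by positivity) one_pos, ← ENNReal.ofReal_mul (Real.rpow_nonneg (hle ω) _)]
    congr 1
    simp [mul_comm]
  rw [lintegral_congr h1, ← ofReal_integral_eq_lintegral_ofReal _ _, integral_const_mul] at h
  · have h0 : 0 ≤ ∫ ω : SS n, (1 - ω.1 0) ^ s ∂(sphereMeasure n) :=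
      integral_nonneg fun ω => Real.rpow_nonneg (hle ω) _
    exact (ENNReal.ofReal_eq_ofReal_iff (by positivity) (by positivity)).1 h
  · refine (cont_int ?_).const_mul _
    exact Continuous.rpow_const (by fun_prop) fun _ => Or.inr hs.le
  · exact .of_forall fun ω => mul_nonneg G1.le (Real.rpow_nonneg (hle ω) _)

lemma pot_one_north {n : ℕ} (hn : 1 ≤ n) {lam : ℝ} (hl : 0 < lam) :
    pot lam (fun _ : SS n => (1:ℝ)) (north n) =
      2 ^ (n + lam) * Real.pi ^ ((n:ℝ) / 2) * (Real.Gamma ((n + lam) / 2) / Real.Gamma (n + lam / 2)) := by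
  have hp := Real.pi_pos
  have hn0 : (0:ℝ) < n := by exact_mod_cast hn
  have h := sphere_int hn (show 0 < lam / 2 by positivity)
  have G1 := Real.Gamma_pos_of_pos (show 0 < (n:ℝ) + lam / 2 by positivity)
  have h1 : pot lam (fun _ : SS n => (1:ℝ)) (north n) =
      2 ^ (lam / 2) * ∫ ω : SS n, (1 - ω.1 0) ^ (lam / 2) ∂(sphereMeasure n) := by
    unfold pot
    rw [← integral_const_mul]
    refine integral_congr_ae (.of_forall fun ω => ?_)
    have hle := inner_le_S ω (north n)
    rw [inner_north] at hle
    simp only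
    rw [one_mul, ← rpow_dist_half, dist_sq_S, real_inner_comm, inner_north,
      Real.mul_rpow (by norm_num) (by linarith)]
  rw [h1]
  rw [mul_comm, ← eq_div_iff G1.ne'] at h
  rw [h, Real.mul_rpow (by norm_num) hp.le, show ((n:ℝ) + lam) / 2 = lam / 2 + n / 2 by ring,
    show (n:ℝ) + lam = lam / 2 + (n / 2 + (lam / 2 + n / 2)) by ring]
  simp only [Real.rpow_add two_pos]
  ring

lemma pot_one {n : ℕ} (hn : 1 ≤ n) {lam : ℝ} (hl : 0 < lam) (ξ : SS n) :
    pot lam (fun _ : SS n => (1:ℝ)) ξ =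
      2 ^ (n + lam) * Real.pi ^ ((n:ℝ) / 2) * (Real.Gamma ((n + lam) / 2) / Real.Gamma (n + lam / 2)) := by
  rw [← pot_one_north hn hl]
  have h1 : rfl' (ξ.1 - (north n).1) ξ = north n :=
    Subtype.ext (Submodule.reflection_sub (by rw [SS.norm_eq, SS.norm_eq]))
  have := pot_isoS (lam := lam)
    (Submodule.reflection (Submodule.span ℝ {ξ.1 - (north n).1})ᗮ) (fun _ => (1:ℝ)) ξ
  rw [this]
  exact congrArg _ h1

lemma area {n : ℕ} (hn : 1 ≤ n) :
    (sphereMeasure n).real Set.univ =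
      2 ^ (n:ℝ) * Real.pi ^ ((n:ℝ) / 2) * (Real.Gamma ((n:ℝ) / 2) / Real.Gamma n) := by
  have hp := Real.pi_pos
  have hn0 : (0:ℝ) < n := by exact_mod_cast hn
  have h := Real.Gamma_mul_Gamma_add_half ((n:ℝ) / 2)
  have G1 := Real.Gamma_pos_of_pos hn0
  have G2 := Real.Gamma_pos_of_pos (show 0 < (n:ℝ) / 2 by positivity)
  have G3 := Real.Gamma_pos_of_pos (show 0 < (n:ℝ) / 2 + 1 / 2 by positivity)
  unfold sphereMeasure
  rw [Measure.toSphere_real_apply_univ, Measure.real, EuclideanSpace.volume_ball]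
  simp only [ENNReal.ofReal_one, one_pow, one_mul, finrank_euclideanSpace, Fintype.card_fin]
  rw [show ((n + 1 : ℕ) : ℝ) / 2 + 1 = ((n:ℝ) / 2 + 1 / 2) + 1 by push_cast; ring,
    Real.Gamma_add_one (by positivity), ENNReal.toReal_ofReal (by positivity)]
  rw [show 2 * ((n:ℝ) / 2) = n by ring, Real.rpow_sub two_pos, Real.rpow_one] at h
  have hs : Real.sqrt Real.pi ^ n = Real.pi ^ ((n:ℝ) / 2) := by
    rw [Real.sqrt_eq_rpow, ← Real.rpow_natCast, ← Real.rpow_mul hp.le]; congr 1; ring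
  rw [pow_succ, hs]
  generalize Real.Gamma ((n:ℝ) / 2 + 1 / 2) = g at *
  have h2 : (0:ℝ) < 2 ^ (n:ℝ) := by positivity
  have h3 : g * (Real.Gamma (n / 2) * 2 ^ (n:ℝ)) =
      Real.Gamma n * 2 * Real.sqrt Real.pi := by
    field_simp at h; linarith
  have h4 : (0:ℝ) < Real.pi ^ ((n:ℝ) / 2) := by positivity
  push_cast
  field_simp
  linear_combination (-1) * h3

lemma const_eq {n : ℕ} {lam p q α : ℝ} (E : Expo n lam p q) (hα : α = n + lam) :
    nq lam q (fun _ : SS n => (1:ℝ)) / np p (fun _ : SS n => (1:ℝ)) =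
    Real.pi ^ (((n : ℝ) - α) / 2) * (Real.Gamma (α / 2) / Real.Gamma (((n : ℝ) + α) / 2)) *
              (Real.Gamma ((n : ℝ) / 2) / Real.Gamma (n : ℝ)) ^ (-(α / (n : ℝ))) := by
  have hp := Real.pi_pos
  have hn0 := E.n0
  have hl := E.hl
  have hA := area E.hn
  set A := (sphereMeasure n).real Set.univ
  have G1 := Real.Gamma_pos_of_pos hn0
  have G2 := Real.Gamma_pos_of_pos (show 0 < (n:ℝ) / 2 by positivity)
  have G3 := Real.Gamma_pos_of_pos (show 0 < ((n:ℝ) + lam) / 2 by positivity)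
  have G4 := Real.Gamma_pos_of_pos (show 0 < (n:ℝ) + lam / 2 by positivity)
  have A0 : 0 < A := by rw [hA]; positivity
  have hq := E.q0
  have hpp := E.p0
  unfold nq np
  simp only [pot_one E.hn hl, integral_const, Real.one_rpow, smul_eq_mul, mul_one]
  set P := 2 ^ (n + lam) * Real.pi ^ ((n:ℝ) / 2) *
    (Real.Gamma ((n + lam) / 2) / Real.Gamma (n + lam / 2)) with hP
  have P0 : 0 < P := by positivity
  change (A * P ^ q) ^ (1 / q) / A ^ (1 / p) = _
  have hexp : 1 / q - 1 / p = -(α / n) := by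
    have h1 : 1 / p = (n + lam / 2) / n := by
      rw [div_eq_div_iff hpp.ne' hn0.ne']; linarith [E.hp]
    have h2 : 1 / q = -(lam / 2) / n := by
      rw [div_eq_div_iff hq.ne hn0.ne']; linarith [E.hq]
    rw [h1, h2, hα]; field_simp; ring
  rw [Real.mul_rpow A0.le (by positivity), ← Real.rpow_mul P0.le, mul_one_div_cancel hq.ne,
    Real.rpow_one, mul_comm, mul_div_assoc, ← Real.rpow_sub A0, hexp, hA,
    Real.mul_rpow (by positivity) (by positivity), Real.mul_rpow (by positivity) (by positivity),
    ← Real.rpow_mul two_pos.le, ← Real.rpow_mul hp.le, hP,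
    show (n:ℝ) * -(α / n) = -α by field_simp, show (n:ℝ) / 2 * -(α / n) = -(α / 2) by field_simp,
    show ((n:ℝ) - α) / 2 = n / 2 + -(α / 2) by ring, Real.rpow_add hp,
    show ((n:ℝ) + α) / 2 = n + lam / 2 by rw [hα]; ring, ← hα]
  have h2 : (2:ℝ) ^ α * 2 ^ (-α) = 1 := by rw [← Real.rpow_add two_pos]; simp
  linear_combination (Real.pi ^ ((n:ℝ) / 2) * (Real.Gamma (α / 2) / Real.Gamma (n + lam / 2)) *
    Real.pi ^ (-(α / 2)) * (Real.Gamma ((n : ℝ) / 2) / Real.Gamma (n : ℝ)) ^ (-(α / (n : ℝ)))) * h2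
end constant


section final
variable {n : ℕ} {lam p q : ℝ}

lemma form_iff (F : SS n → ℝ) (c : ℝ) :
    (∃ (a : ℝ) (v : EE n), 0 < a ∧ ∀ᵐ ω ∂(sphereMeasure n), F ω = a * kf v ω ^ c) ↔
    ∃ (a : ℝ) (η : EE n), 0 < a ∧ ‖η‖ < 1 ∧
      ∀ᵐ ω ∂(sphereMeasure n), F ω = a * (1 - ⟪ω.1, η⟫) ^ c := by
  constructor
  · rintro ⟨a, v, ha, h⟩
    have g0 := gam_pos v
    refine ⟨a * gam v ^ c, (gam v)⁻¹ • v, by positivity, ?_, ?_⟩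
    · rw [norm_smul, norm_inv, Real.norm_of_nonneg g0.le, inv_mul_lt_one₀ g0]
      exact norm_lt_gam v
    · filter_upwards [h] with ω hω
      have h1 : 1 - ⟪ω.1, (gam v)⁻¹ • v⟫ = (gam v)⁻¹ * kf v ω := by
        rw [kf_eq, real_inner_smul_right]; field_simp
      rw [hω, h1, mul_assoc, ← Real.mul_rpow g0.le (mul_pos (inv_pos.2 g0) (kf_pos v ω)).le,
        mul_inv_cancel_left₀ g0.ne']
  · rintro ⟨a, η, ha, hη, h⟩
    have h1 : 0 < 1 - ‖η‖ ^ 2 := by nlinarith [norm_nonneg η]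
    set t := Real.sqrt (1 - ‖η‖ ^ 2) with ht
    have t0 : 0 < t := Real.sqrt_pos.2 h1
    have t2 : t ^ 2 = 1 - ‖η‖ ^ 2 := Real.sq_sqrt h1.le
    have hg : gam (t⁻¹ • η) = t⁻¹ := by
      unfold gam
      rw [Real.sqrt_eq_iff_mul_self_eq (by positivity) (by positivity), norm_smul, norm_inv,
        Real.norm_of_nonneg t0.le]
      field_simp; linarith
    have hk : ∀ ω : SS n, 1 - ⟪ω.1, η⟫ = t * kf (t⁻¹ • η) ω := by
      intro ω
      rw [kf_eq, hg, real_inner_smul_right]; field_simp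
    refine ⟨a * t ^ c, t⁻¹ • η, by positivity, ?_⟩
    filter_upwards [h] with ω hω
    rw [hω, hk, Real.mul_rpow t0.le (kf_pos _ ω).le]; ring

lemma riesz_eq {α : ℝ} (hα : α = n + lam) (hl : 0 < lam) {F : SS n → ℝ} (hF : Adm F) (ξ : SS n) :
    sphereRiesz n α F ξ = ENNReal.ofReal (pot lam F ξ) := by
  unfold sphereRiesz pot
  rw [show α - n = lam by rw [hα]; ring]
  rw [ofReal_integral_eq_lintegral_ofReal (kern_int hl hF.int ξ)]
  exact .of_forall fun η => mul_nonneg (hF.nonneg η) (by positivity)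

lemma lhs_eq {α : ℝ} (hα : α = n + lam) (E : Expo n lam p q) {F : SS n → ℝ} (hF : Adm F) :
    (∫⁻ ξ, (sphereRiesz n α F ξ) ^ q ∂(sphereMeasure n)) ^ (1 / q) =
      ENNReal.ofReal (nq lam q F) := by
  have h1 : ∀ ξ, (sphereRiesz n α F ξ) ^ q = ENNReal.ofReal (pot lam F ξ ^ q) := fun ξ => by
    rw [riesz_eq hα E.hl hF, ENNReal.ofReal_rpow_of_pos (hF.pot_pos E ξ)]
  rw [lintegral_congr h1, ← ofReal_integral_eq_lintegral_ofReal (cont_int (hF.potq_cont E q))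
    (.of_forall fun ξ => Real.rpow_nonneg (hF.pot_pos E ξ).le _),
    ENNReal.ofReal_rpow_of_pos (hF.qpos E)]
  rfl

lemma riesz_top (hn : 1 ≤ n) {α : ℝ} (hα : (n:ℝ) < α) {F : SS n → ℝ} (hm : Measurable F)
    (h0 : ∀ ω, 0 ≤ F ω) (hF : ¬ Integrable F (sphereMeasure n)) :
    ∀ᵐ ξ ∂(sphereMeasure n), sphereRiesz n α F ξ = ∞ := by
  have hl : 0 < α - n := sub_pos.2 hα
  have : NullSingletonClass (sphereMeasure n) := ⟨fun ξ => sphereMeasure_singleton hn ξ⟩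
  have hs : {ξ : SS n | ¬ sphereRiesz n α F ξ = ∞}.Subsingleton := by
    intro ξ hξ ζ hζ
    by_contra hne
    apply hF
    have hd : 0 < dist ξ.1 ζ.1 := dist_pos.2 fun h => hne (Subtype.ext h)
    have hsum := ENNReal.add_lt_top.2 ⟨lt_top_iff_ne_top.2 hξ, lt_top_iff_ne_top.2 hζ⟩
    set c := (dist ξ.1 ζ.1 / 2) ^ (α - n) with hc
    have c0 : 0 < c := by positivity
    have key : ∀ η : SS n, ENNReal.ofReal (c * F η) ≤
        ENNReal.ofReal (F η * dist ξ.1 η.1 ^ (α - n)) +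
        ENNReal.ofReal (F η * dist ζ.1 η.1 ^ (α - n)) := by
      intro η
      have f0 := h0 η
      rw [← ENNReal.ofReal_add (by positivity) (by positivity)]
      refine ENNReal.ofReal_le_ofReal ?_
      have ht : dist ξ.1 ζ.1 ≤ dist ξ.1 η.1 + dist ζ.1 η.1 := dist_triangle_right _ _ _
      have hA : 0 ≤ dist ξ.1 η.1 ^ (α - n) := by positivity
      have hB : 0 ≤ dist ζ.1 η.1 ^ (α - n) := by positivity
      have : c ≤ dist ξ.1 η.1 ^ (α - n) + dist ζ.1 η.1 ^ (α - n) := by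
        rcases le_total (dist ξ.1 ζ.1 / 2) (dist ξ.1 η.1) with h | h
        · have := Real.rpow_le_rpow (by positivity) h hl.le; linarith
        · have := Real.rpow_le_rpow (by positivity)
            (show dist ξ.1 ζ.1 / 2 ≤ dist ζ.1 η.1 by linarith) hl.le
          linarith
      nlinarith
    have hlt : ∫⁻ η, ENNReal.ofReal (c * F η) ∂(sphereMeasure n) < ∞ := by
      refine lt_of_le_of_lt (lintegral_mono key) ?_
      rw [lintegral_add_left (by fun_prop)]
      exact hsum
    have hi : Integrable (fun η => c * F η) (sphereMeasure n) :=
      (lintegral_ofReal_ne_top_iff_integrable (by fun_prop)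
        (.of_forall fun η => mul_nonneg c0.le (h0 η))).1 hlt.ne
    have := hi.const_mul c⁻¹
    simpa [inv_mul_cancel_left₀ c0.ne'] using this
  exact hs.measure_zero _
end final

/-- **Extremal functions for the sharp reversed HLS inequality on the sphere**
(Theorem 1.2, equality case): for `1 ≤ n < α`, `p = 2n/(n+α)`, `q = 2n/(n-α)`, a
nonnegative `F ∈ L^p(𝕊ⁿ)`, not identically zero, achieves equality
`‖Ĩ_α F‖_{L^q(𝕊ⁿ)} = N*(n,α) ‖F‖_{L^p(𝕊ⁿ)}` if and only if
`F(ξ) = a (1 - ξ·η)^(-(n+α)/2)` for some `a > 0` and `η ∈ ℝ^(n+1)` with `|η| < 1`. -/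
theorem sharp_reversed_HLS_sphere_extremals (n : ℕ) (hn : 1 ≤ n) (α p q : ℝ)
    (hα : (n : ℝ) < α)
    (hp : p = 2 * n / ((n : ℝ) + α)) (hq : q = 2 * n / ((n : ℝ) - α))
    (F : sphere (0 : EuclideanSpace ℝ (Fin (n + 1))) 1 → ℝ)
    (hF : Measurable F) (hFpos : ∀ ξ, 0 ≤ F ξ)
    (hFLp : Integrable (fun ξ => |F ξ| ^ p) (sphereMeasure n))
    (hFne : ¬ (F =ᵐ[sphereMeasure n] 0)) :
    (∫⁻ ξ, (sphereRiesz n α F ξ) ^ q ∂(sphereMeasure n)) ^ (1 / q) =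
        ENNReal.ofReal
          ((Real.pi ^ (((n : ℝ) - α) / 2) * (Real.Gamma (α / 2) / Real.Gamma (((n : ℝ) + α) / 2)) *
              (Real.Gamma ((n : ℝ) / 2) / Real.Gamma (n : ℝ)) ^ (-(α / (n : ℝ)))) *
            (∫ ξ, |F ξ| ^ p ∂(sphereMeasure n)) ^ (1 / p)) ↔
      ∃ (a : ℝ) (η : EuclideanSpace ℝ (Fin (n + 1))), 0 < a ∧ ‖η‖ < 1 ∧
        ∀ᵐ ξ ∂(sphereMeasure n),
          F ξ = a * (1 - ⟪(ξ : EuclideanSpace ℝ (Fin (n + 1))), η⟫) ^ (-(((n : ℝ) + α) / 2)) := by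
  set lam := α - n with hlam
  have hn0 : (0:ℝ) < n := by exact_mod_cast hn
  have hl : 0 < lam := sub_pos.2 hα
  have E : Expo n lam p q := by
    refine ⟨hn, hl, ?_, ?_⟩
    · have : (n:ℝ) + α ≠ 0 := by linarith
      rw [hp, hlam]; field_simp; ring
    · have : (n:ℝ) - α ≠ 0 := by linarith
      rw [hq, hlam]; field_simp; ring
  have hα' : α = n + lam := by rw [hlam]; ring
  have hc : -(((n:ℝ) + α) / 2) = -((n:ℝ) + lam / 2) := by rw [hα']; ring
  have hadm : Integrable F (sphereMeasure n) →
      ((∫⁻ ξ, (sphereRiesz n α F ξ) ^ q ∂(sphereMeasure n)) ^ (1 / q) =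
        ENNReal.ofReal
          ((Real.pi ^ (((n : ℝ) - α) / 2) * (Real.Gamma (α / 2) / Real.Gamma (((n : ℝ) + α) / 2)) *
              (Real.Gamma ((n : ℝ) / 2) / Real.Gamma (n : ℝ)) ^ (-(α / (n : ℝ)))) *
            (∫ ξ, |F ξ| ^ p ∂(sphereMeasure n)) ^ (1 / p)) ↔
      ∃ (a : ℝ) (η : EuclideanSpace ℝ (Fin (n + 1))), 0 < a ∧ ‖η‖ < 1 ∧
        ∀ᵐ ξ ∂(sphereMeasure n),
          F ξ = a * (1 - ⟪(ξ : EuclideanSpace ℝ (Fin (n + 1))), η⟫) ^ (-(((n : ℝ) + α) / 2))) := by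
    intro hi
    have aF : Adm F := ⟨hi, hFpos, hFne⟩
    rw [hc, ← form_iff, ← sharp_abstract E aF, lhs_eq hα' E aF, ← const_eq E hα']
    simp only [abs_of_nonneg (hFpos _)]
    change ENNReal.ofReal _ = ENNReal.ofReal (_ * np p F) ↔ _
    have h1 := aF.nq_pos E
    have h2 := aF.np_pos E
    have h3 := (adm_one (n := n)).nq_pos E
    have h4 := (adm_one (n := n)).np_pos E
    exact ENNReal.ofReal_eq_ofReal_iff h1.le (mul_pos (div_pos h3 h4) h2).le
  by_cases hi : Integrable F (sphereMeasure n)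
  · exact hadm hi
  constructor
  · intro h
    exfalso
    have h1 : ∫⁻ ξ, (sphereRiesz n α F ξ) ^ q ∂(sphereMeasure n) = 0 := by
      rw [← lintegral_zero (μ := sphereMeasure n)]
      refine lintegral_congr_ae ?_
      filter_upwards [riesz_top hn hα hF hFpos hi] with ξ hξ
      rw [hξ, ENNReal.top_rpow_of_neg E.q0]
    rw [h1, ENNReal.zero_rpow_of_neg (one_div_neg.2 E.q0)] at h
    exact ENNReal.ofReal_ne_top h.symm
  · intro h
    refine (hadm ?_).2 h
    rw [hc, ← form_iff] at h
    obtain ⟨a, v, ha, h⟩ := h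
    refine Integrable.congr (cont_int (f := fun ω => a * kf v ω ^ (-((n:ℝ) + lam / 2))) ?_)
      (Filter.EventuallyEq.symm h)
    exact continuous_const.mul ((kf_cont v).rpow_const fun ω => Or.inl (kf_pos v ω).ne')
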